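/- arXiv:1104.5307 — 7 statements merged into one kernel-verified Lean document; each statement's English description precedes it below -/
import Mathlib

section
/- Let M be a real Banach space and let F : M → ℝ be a bounded linear functional with operator norm 1. Equip ℝ × ℝ × M with the norm ‖(x,y,z)‖ = max{|x|, |y|, ‖z‖_M, |x + y + F(z)|}, and let B₁, B₂, B₃ be the closed balls of radius 1 in this norm with centers (2,0,0_M), (0,2,0_M) and (2,2,0_M) respectively. Then B₁ ∩ B₂ ∩ B₃ ≠ ∅ if and only if there exists z ∈ M with ‖z‖_M = 1 and |F(z)| = 1. Concretely, the left-hand side says: there exist x, y ∈ ℝ and z ∈ M with max{|x−2|, |y|, ‖z‖_M, |x+y+F(z)−2|} ≤ 1, max{|x|, |y−2|, ‖z‖_M, |x+y+F(z)−2|} ≤ 1 and max{|x−2|, |y−2|, ‖z‖_M, |x+y+F(z)−4|} ≤ 1. -/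
/-!
Comparing the first two coordinates of the three balls forces `x = y = 1`, and then the last
coordinate forces `F z = 1`. The intersection is therefore a copy of `{z | ‖z‖ ≤ 1 ∧ F z = 1}`.
Since `|F z| ≤ ‖z‖`, any such `z` lies on the unit sphere; conversely, a point of the
unit sphere where `F` takes the value `±1` belongs to it up to sign.
-/

theorem mem_inter_three_unit_balls_iff (x y r t : ℝ) :
    (max (max |x - 2| |y|) (max r |x + y + t - 2|) ≤ 1 ∧
      max (max |x| |y - 2|) (max r |x + y + t - 2|) ≤ 1 ∧
      max (max |x - 2| |y - 2|) (max r |x + y + t - 4|) ≤ 1) ↔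
    x = 1 ∧ y = 1 ∧ r ≤ 1 ∧ t = 1 := by
  simp only [max_le_iff, abs_le]
  constructor
  · rintro ⟨⟨⟨⟨hx_ge, -⟩, -, hy_le⟩, hr, -, ht_le⟩, ⟨⟨⟨-, hx_le⟩, hy_ge, -⟩, -⟩, -, -, ht_ge, -⟩
    have hx : x = 1 := by linarith
    have hy : y = 1 := by linarith
    have ht : t = 1 := by linarith
    exact ⟨hx, hy, hr, ht⟩
  · rintro ⟨rfl, rfl, hr, rfl⟩
    norm_num [hr]

theorem exists_norm_eq_and_map_eq_abs {𝓕 E α : Type*} [SeminormedAddGroup E] [AddGroup α]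
    [LinearOrder α] [FunLike 𝓕 E α] [AddMonoidHomClass 𝓕 E α] (F : 𝓕) (z : E) :
    ∃ w : E, ‖w‖ = ‖z‖ ∧ F w = |F z| := by
  rcases abs_choice (F z) with h | h
  · exact ⟨z, rfl, h.symm⟩
  · exact ⟨-z, norm_neg z, (map_neg F z).trans h.symm⟩

theorem exists_norm_le_one_map_eq_one_iff {𝓕 E : Type*} [SeminormedAddGroup E] [FunLike 𝓕 E ℝ]
    [AddMonoidHomClass 𝓕 E ℝ] (F : 𝓕) (hF : ∀ z, |F z| ≤ ‖z‖) :
    (∃ z : E, ‖z‖ ≤ 1 ∧ F z = 1) ↔ ∃ z : E, ‖z‖ = 1 ∧ |F z| = 1 := by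
  constructor
  · rintro ⟨z, hz, hFz⟩
    have habs : |F z| = 1 := by rw [hFz, abs_one]
    exact ⟨z, hz.antisymm (habs ▸ hF z), habs⟩
  · rintro ⟨z, hz, hFz⟩
    obtain ⟨w, hw, hFw⟩ := exists_norm_eq_and_map_eq_abs F z
    exact ⟨w, (hw.trans hz).le, hFw.trans hFz⟩

theorem stmt0_general {𝓕 M : Type*} [SeminormedAddGroup M] [FunLike 𝓕 M ℝ]
    [AddMonoidHomClass 𝓕 M ℝ] (F : 𝓕) (hF : ∀ z, |F z| ≤ ‖z‖) :
    (∃ (x y : ℝ) (z : M),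
        max (max |x - 2| |y|) (max ‖z‖ |x + y + F z - 2|) ≤ 1 ∧
        max (max |x| |y - 2|) (max ‖z‖ |x + y + F z - 2|) ≤ 1 ∧
        max (max |x - 2| |y - 2|) (max ‖z‖ |x + y + F z - 4|) ≤ 1) ↔
      ∃ z : M, ‖z‖ = 1 ∧ |F z| = 1 := by
  simp only [mem_inter_three_unit_balls_iff, exists_and_left, exists_eq_left]
  exact exists_norm_le_one_map_eq_one_iff F hF

/-- Alfsen–Effros style lemma: in `ℝ × ℝ × M` with norm
`‖(x,y,z)‖ = max {|x|, |y|, ‖z‖, |x + y + F z|}`, the three closed unit balls around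
`(2,0,0)`, `(0,2,0)` and `(2,2,0)` have a common point iff `F` attains the value `±1`
on the unit sphere of `M`. -/
theorem stmt0 {M : Type*} [NormedAddCommGroup M] [NormedSpace ℝ M] [CompleteSpace M]
    (F : M →L[ℝ] ℝ) (hF : ‖F‖ = 1) :
    (∃ (x y : ℝ) (z : M),
        max (max |x - 2| |y|) (max ‖z‖ |x + y + F z - 2|) ≤ 1 ∧
        max (max |x| |y - 2|) (max ‖z‖ |x + y + F z - 2|) ≤ 1 ∧
        max (max |x - 2| |y - 2|) (max ‖z‖ |x + y + F z - 4|) ≤ 1) ↔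
      ∃ z : M, ‖z‖ = 1 ∧ |F z| = 1 :=
  stmt0_general F fun z => by simpa [hF] using F.le_opNorm z
end

section
/- Let (M_n)_{n∈ℕ} be a family of real Banach spaces and for each n let F_n : M_n → ℝ be a bounded linear functional with operator norm 1. Then there exists f in lp (fun n => M_n) 1 with ‖f‖ = 1 and ∑_n F_n(f(n)) = 1 if and only if there exist n ∈ ℕ and x ∈ M_n with ‖x‖ = 1 and F_n(x) = 1. -/
/-! If `∑ F_i (f i) = ‖f‖ = ∑ ‖f i‖`, the termwise bounds `re (F_i (f i)) ≤ ‖f i‖` leave no slack,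
so `F_i (f i) = ‖f i‖` for all `i`, and any nonzero coordinate of `f`, normalized, is a unit vector
at which its `F_i` equals `1`. Conversely, such a vector is placed in the `i`-th coordinate. -/

section

open RCLike

variable {𝕜 α : Type*}

theorem eq_ofReal_of_norm_le_of_hasSum [RCLike 𝕜] {z : α → 𝕜} {r : α → ℝ} {s : ℝ}
    (hz : HasSum z (s : 𝕜)) (hr : HasSum r s) (hzr : ∀ i, ‖z i‖ ≤ r i) (i : α) :
    z i = (r i : 𝕜) := by
  have hre : HasSum (fun j ↦ re (z j)) s := by
    simpa only [ofReal_re] using hasSum_re 𝕜 hz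
  have hgap : HasSum (fun j ↦ r j - re (z j)) 0 := by
    simpa only [sub_self] using hr.sub hre
  have hgap_nonneg (j : α) : 0 ≤ r j - re (z j) :=
    sub_nonneg.2 ((re_le_norm (z j)).trans (hzr j))
  have hre_eq : r i = re (z i) :=
    sub_eq_zero.1 (congrFun ((hasSum_zero_iff_of_nonneg hgap_nonneg).1 hgap) i)
  rw [hre_eq, re_eq_self_of_le ((hzr i).trans_eq hre_eq)]

theorem exists_norm_eq_one_and_apply_eq_one [RCLike 𝕜] {E : Type*} [NormedAddCommGroup E]
    [NormedSpace 𝕜 E] {φ : E →ₗ[𝕜] 𝕜} {x : E} (hx : x ≠ 0) (hφ : φ x = (‖x‖ : 𝕜)) :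
    ∃ y : E, ‖y‖ = 1 ∧ φ y = 1 := by
  have hnorm : (‖x‖ : 𝕜) ≠ 0 := ofReal_ne_zero.2 (norm_ne_zero_iff.2 hx)
  refine ⟨(‖x‖⁻¹ : 𝕜) • x, norm_smul_inv_norm hx, ?_⟩
  rw [map_smul, hφ, smul_eq_mul, inv_mul_cancel₀ hnorm]

variable {M : α → Type*} [∀ i, NormedAddCommGroup (M i)]

theorem tsum_apply_lp_single [DecidableEq α] {N : Type*} [AddCommMonoid N] [TopologicalSpace N]
    (φ : ∀ i, M i →+ N) (p : ENNReal) (i : α) (x : M i) :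
    ∑' j, φ j (lp.single p i x j) = φ i x := by
  rw [tsum_eq_single i fun j hj ↦ by rw [lp.single_apply_ne p i x hj, map_zero],
    lp.single_apply_self]

theorem hasSum_norm_lp_one (f : lp M 1) : HasSum (fun i ↦ ‖f i‖) ‖f‖ := by
  simpa only [ENNReal.toReal_one, Real.rpow_one] using lp.hasSum_norm (p := 1) (by simp) f

theorem summable_apply_lp_one [NontriviallyNormedField 𝕜] [∀ i, NormedSpace 𝕜 (M i)]
    {N : Type*} [NormedAddCommGroup N] [NormedSpace 𝕜 N] [CompleteSpace N]
    {F : ∀ i, M i →L[𝕜] N} {C : ℝ} (hF : ∀ i, ‖F i‖ ≤ C) (f : lp M 1) :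
    Summable fun i ↦ F i (f i) :=
  .of_norm_bounded ((hasSum_norm_lp_one f).summable.mul_left C)
    fun i ↦ (F i).le_of_opNorm_le (hF i) (f i)

variable [RCLike 𝕜] [∀ i, NormedSpace 𝕜 (M i)] {F : ∀ i, M i →L[𝕜] 𝕜}

theorem apply_eq_norm_of_tsum_apply_eq_norm (hF : ∀ i, ‖F i‖ ≤ 1) {f : lp M 1}
    (hf : ∑' i, F i (f i) = (‖f‖ : 𝕜)) (i : α) : F i (f i) = (‖f i‖ : 𝕜) := by
  have hsum : HasSum (fun j ↦ F j (f j)) (‖f‖ : 𝕜) := hf ▸ (summable_apply_lp_one hF f).hasSum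
  have hle (j : α) : ‖F j (f j)‖ ≤ ‖f j‖ := by
    simpa only [one_mul] using (F j).le_of_opNorm_le (hF j) (f j)
  exact eq_ofReal_of_norm_le_of_hasSum hsum (hasSum_norm_lp_one f) hle i

theorem stmt2_general (hF : ∀ i, ‖F i‖ ≤ 1) :
    (∃ f : lp M 1, ‖f‖ = 1 ∧ ∑' i, F i (f i) = 1) ↔
      ∃ (i : α) (x : M i), ‖x‖ = 1 ∧ F i x = 1 := by
  classical
  constructor
  · rintro ⟨f, hnorm, hsum⟩
    have hf : f ≠ 0 := norm_ne_zero_iff.1 (hnorm ▸ one_ne_zero)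
    obtain ⟨i, hi⟩ : ∃ i, f i ≠ 0 := by
      contrapose! hf
      exact lp.ext (funext hf)
    have hFi : F i (f i) = (‖f i‖ : 𝕜) :=
      apply_eq_norm_of_tsum_apply_eq_norm hF (by rw [hsum, hnorm, ofReal_one]) i
    exact ⟨i, exists_norm_eq_one_and_apply_eq_one (φ := (F i : M i →ₗ[𝕜] 𝕜)) hi hFi⟩
  · rintro ⟨i, x, hx, hFx⟩
    exact ⟨lp.single 1 i x, (lp.norm_single one_pos i x).trans hx,
      (tsum_apply_lp_single (fun j ↦ (F j : M j →+ 𝕜)) 1 i x).trans hFx⟩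

end

/-- `F_∃` attains its norm on the ℓ¹-direct sum iff some `F_n` attains its norm. -/
theorem stmt2 (M : ℕ → Type*) [∀ n, NormedAddCommGroup (M n)] [∀ n, NormedSpace ℝ (M n)]
    [∀ n, CompleteSpace (M n)] (F : ∀ n, M n →L[ℝ] ℝ) (hF : ∀ n, ‖F n‖ = 1) :
    (∃ f : lp (fun n => M n) 1, ‖f‖ = 1 ∧ ∑' n, F n (f n) = 1) ↔
      ∃ (n : ℕ) (x : M n), ‖x‖ = 1 ∧ F n x = 1 :=
  stmt2_general fun n ↦ (hF n).le
end

section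
/- Let (M_n)_{n∈ℕ} be a family of real Banach spaces and for each n let F_n : M_n → ℝ be a bounded linear functional with operator norm 1. Let f ∈ Π_n M_n be such that the series ∑_{n=0}^∞ 2^{−(n+1)} · max(‖f(n)‖, ‖f(n+1)‖) is summable with sum 1 and the series ∑_{n=0}^∞ 2^{−(n+2)} · (F_n(f(n)) + F_{n+1}(f(n+1))) is summable with sum 1. Then for every n ∈ ℕ, ‖f(n)‖ = 1 and F_n(f(n)) = 1; in particular every F_n attains its norm. -/
/-!
Since `F n (f n) ≤ ‖f n‖`, each term of the functional's series is an average of two numbers bounded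
by the maximum in the corresponding term of the norm's series. Equal sums force equality in every
term, and an average reaches such a maximum only when both numbers attain their bounds and the
bounds coincide. Hence `F n (f n) = ‖f n‖ = ‖f (n + 1)‖` for all `n`, and as the weights add up to
`1`, the constant value of `‖f n‖` is the common sum.
-/

theorem eq_of_le_of_hasSum {ι α : Type*} [AddCommGroup α] [PartialOrder α] [IsOrderedAddMonoid α]
    [TopologicalSpace α] [IsTopologicalAddGroup α] [OrderClosedTopology α] {u v : ι → α} {s : α}
    (huv : u ≤ v) (hu : HasSum u s) (hv : HasSum v s) : u = v :=
  huv.eq_of_not_lt fun hlt => (hasSum_strict_mono hu hv hlt).false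

section AverageLeMax

variable {𝕜 : Type*} [Field 𝕜] [LinearOrder 𝕜] [IsStrictOrderedRing 𝕜] {a b x y : 𝕜}

theorem add_div_two_le_max_of_le (hax : a ≤ x) (hby : b ≤ y) : (a + b) / 2 ≤ max x y := by
  linarith [le_max_left x y, le_max_right x y]

theorem eq_and_eq_and_eq_of_add_div_two_eq_max (hax : a ≤ x) (hby : b ≤ y)
    (h : (a + b) / 2 = max x y) : a = x ∧ b = y ∧ x = y := by
  have hx : x ≤ max x y := le_max_left x y
  have hy : y ≤ max x y := le_max_right x y
  refine ⟨?_, ?_, ?_⟩ <;> linarith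

end AverageLeMax

theorem add_div_two_eq_max_of_hasSum {ι : Type*} {w a b x y : ι → ℝ} {s : ℝ}
    (hw : ∀ i, 0 < w i) (hax : ∀ i, a i ≤ x i) (hby : ∀ i, b i ≤ y i)
    (hmax : HasSum (fun i => w i * max (x i) (y i)) s)
    (havg : HasSum (fun i => w i * ((a i + b i) / 2)) s) (i : ι) :
    (a i + b i) / 2 = max (x i) (y i) := by
  have hle : (fun i => w i * ((a i + b i) / 2)) ≤ fun i => w i * max (x i) (y i) := fun i =>
    mul_le_mul_of_nonneg_left (add_div_two_le_max_of_le (hax i) (hby i)) (hw i).le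
  exact mul_left_cancel₀ (hw i).ne' (congrFun (eq_of_le_of_hasSum hle havg hmax) i)

theorem eq_and_eq_of_hasSum_max_of_hasSum_add_div_two {w a x : ℕ → ℝ} {s : ℝ}
    (hw : ∀ n, 0 < w n) (hw_sum : HasSum w 1) (hax : ∀ n, a n ≤ x n)
    (hmax : HasSum (fun n => w n * max (x n) (x (n + 1))) s)
    (havg : HasSum (fun n => w n * ((a n + a (n + 1)) / 2)) s) (n : ℕ) :
    x n = s ∧ a n = s := by
  have hterm (k : ℕ) : a k = x k ∧ a (k + 1) = x (k + 1) ∧ x k = x (k + 1) :=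
    eq_and_eq_and_eq_of_add_div_two_eq_max (hax k) (hax (k + 1))
      (add_div_two_eq_max_of_hasSum hw hax (fun j => hax (j + 1)) hmax havg k)
  have hconst (k : ℕ) : x k = x 0 := by
    induction k with
    | zero => rfl
    | succ k ih => exact (hterm k).2.2.symm.trans ih
  have hx₀ : x 0 = s := by
    simp only [hconst, max_self] at hmax
    simpa only [one_mul] using (hw_sum.mul_right (x 0)).unique hmax
  have hx : x n = s := (hconst n).trans hx₀
  exact ⟨hx, (hterm n).1.trans hx⟩

theorem hasSum_inv_two_pow_succ : HasSum (fun n : ℕ => ((2 : ℝ) ^ (n + 1))⁻¹) 1 := by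
  convert hasSum_geometric_two' 1 using 2 with n
  ring

theorem stmt4_general (M : ℕ → Type*) [∀ n, SeminormedAddCommGroup (M n)]
    [∀ n, NormedSpace ℝ (M n)] (F : ∀ n, M n →L[ℝ] ℝ) (hF : ∀ n, ‖F n‖ ≤ 1) (f : ∀ n, M n)
    {w : ℕ → ℝ} (hw : ∀ n, 0 < w n) (hw_sum : HasSum w 1) {s : ℝ}
    (hnorm : HasSum (fun n => w n * max ‖f n‖ ‖f (n + 1)‖) s)
    (hfun : HasSum (fun n => w n * ((F n (f n) + F (n + 1) (f (n + 1))) / 2)) s) :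
    ∀ n, ‖f n‖ = s ∧ F n (f n) = s := by
  have hle (n : ℕ) : F n (f n) ≤ ‖f n‖ :=
    (Real.le_norm_self _).trans (by simpa only [one_mul] using (F n).le_of_opNorm_le (hF n) (f n))
  exact eq_and_eq_of_hasSum_max_of_hasSum_add_div_two hw hw_sum hle hnorm hfun

/-- Conversely: if `‖f‖_∀ = 1` and `F_∀ f = 1` (both defining series summing to `1`),
then every coordinate satisfies `‖f n‖ = 1` and `F n (f n) = 1`; in particular every
`F n` attains its norm. -/
theorem stmt4 (M : ℕ → Type*) [∀ n, NormedAddCommGroup (M n)] [∀ n, NormedSpace ℝ (M n)]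
    [∀ n, CompleteSpace (M n)] (F : ∀ n, M n →L[ℝ] ℝ) (hF : ∀ n, ‖F n‖ = 1)
    (f : ∀ n, M n)
    (hnorm : HasSum (fun n => ((2 : ℝ) ^ (n + 1))⁻¹ * max ‖f n‖ ‖f (n + 1)‖) 1)
    (hfun : HasSum (fun n => ((2 : ℝ) ^ (n + 2))⁻¹ * (F n (f n) + F (n + 1) (f (n + 1)))) 1) :
    ∀ n, ‖f n‖ = 1 ∧ F n (f n) = 1 :=
  stmt4_general M F (fun n => (hF n).le) f (fun n => by positivity) hasSum_inv_two_pow_succ hnorm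
    (by convert hfun using 2 with n; ring)
end

section
/- If (C_n)_{n∈ℕ} is a sequence of subsets of Baire space ℕ^ℕ each of which is continuously reducible to Y, then the union ⋃_{n∈ℕ} C_n is continuously reducible to Y. -/
/-- `ℚ` is regarded as carrying the *discrete* topology, so that `N → ℚ` carries the
product topology with discrete factors. -/
instance (priority := high) discreteRatTopology : TopologicalSpace ℚ := ⊥

/-- A rational-valued norm on the ℚ-vector space `N = ℕ →₀ ℚ` of finitely supported
functions from `ℕ` to `ℚ`. -/
structure IsRatNorm (p : (ℕ →₀ ℚ) → ℚ) : Prop where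
  nonneg : ∀ v, 0 ≤ p v
  eq_zero_iff : ∀ v, p v = 0 ↔ v = 0
  smul_eq : ∀ (q : ℚ) (v), p (q • v) = |q| * p v
  add_le : ∀ v w, p (v + w) ≤ p v + p w

/-- The space `X` of pairs `(p, F)` where `p` is a rational norm on `N` and `F` is a
ℚ-linear functional with `|F v| ≤ p v`, topologized as a subspace of
`(N → ℚ) × (N → ℚ)` (with `ℚ` discrete). -/
def Xspace : Type :=
  {pF : ((ℕ →₀ ℚ) → ℚ) × ((ℕ →₀ ℚ) → ℚ) //
    IsRatNorm pF.1 ∧ IsLinearMap ℚ pF.2 ∧ ∀ v, |pF.2 v| ≤ pF.1 v}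

instance : TopologicalSpace Xspace := instTopologicalSpaceSubtype

/-- A sequence in `N` is Cauchy with respect to the rational norm `p`. -/
def IsCauchyWrt (p : (ℕ →₀ ℚ) → ℚ) (v : ℕ → ℕ →₀ ℚ) : Prop :=
  ∀ ε : ℚ, 0 < ε → ∃ K, ∀ m k, K ≤ m → K ≤ k → p (v m - v k) < ε

/-- The set `Y ⊆ X` of pairs `(p, F)` such that `F` attains its norm in the completion of
`(N, p)`: there is a `p`-Cauchy sequence `(v k)` with `p (v k) → 1` and `F (v k) → 1`. -/
def Yset : Set Xspace :=
  {x | ∃ v : ℕ → (ℕ →₀ ℚ), IsCauchyWrt x.val.1 v ∧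
    (∀ ε : ℚ, 0 < ε → ∃ K, ∀ k, K ≤ k → |x.val.1 (v k) - 1| < ε) ∧
    (∀ ε : ℚ, 0 < ε → ∃ K, ∀ k, K ≤ k → |x.val.2 (v k) - 1| < ε)}

/-- A subset `C` of Baire space `ℕ → ℕ` is continuously reducible to `Y`. -/
def ContReducibleToY (C : Set (ℕ → ℕ)) : Prop :=
  ∃ φ : (ℕ → ℕ) → Xspace, Continuous φ ∧ ∀ x, x ∈ C ↔ φ x ∈ Yset

/-! Send a point to the `ℓ¹`-sum of the pairs `(p n, F n)` assigned to it by the given reductions,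
after identifying `N` with a direct sum of countably many copies of itself. It remains to see that
the functional `F` on this sum attains its norm exactly when some `F n` does. If `F n` does, embed
its witnessing sequence in the `n`-th summand. Conversely, let `(v k)` witness that `F` attains its
norm. As `(v k)` is Cauchy and its norms do not tend to zero, the norms of the `n`-th components
tend to a nonzero limit for some `n`. The gap `p n - F n` is nonnegative on each component and
bounded by the total gap, which tends to zero, so `F n` has the same limit along the `n`-th
components, and normalizing these gives a witness for `F n`. -/

open Filter Topology

/-- Convergence of a rational net in the usual sense is phrased in `ℝ`, since `ℚ` itself carries
the discrete topology here. -/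
lemma tendsto_ratCast_iff {α : Type*} {l : Filter α} {f : α → ℚ} {a : ℚ} :
    Tendsto (fun k => (f k : ℝ)) l (𝓝 (a : ℝ)) ↔ ∀ ε : ℚ, 0 < ε → ∀ᶠ k in l, |f k - a| < ε := by
  rw [Metric.tendsto_nhds]
  refine ⟨fun h ε hε => (h ε (Rat.cast_pos.2 hε)).mono fun k hk => ?_, fun h ε hε => ?_⟩
  · rw [Real.dist_eq] at hk
    exact_mod_cast hk
  · obtain ⟨δ, hδ, hδε⟩ := exists_rat_btwn hε
    refine (h δ (Rat.cast_pos.1 hδ)).mono fun k hk => lt_trans ?_ hδε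
    rw [Real.dist_eq]
    exact_mod_cast hk

namespace IsRatNorm

variable {p : (ℕ →₀ ℚ) → ℚ}

/-- A rational norm viewed as a seminorm in the sense of Mathlib, which is real-valued. -/
noncomputable def toSeminorm (hp : IsRatNorm p) : Seminorm ℚ (ℕ →₀ ℚ) :=
  Seminorm.of (fun v => (p v : ℝ)) (fun v w => by exact_mod_cast hp.add_le v w) fun q v => by
    rw [hp.smul_eq, Rat.cast_mul, Rat.cast_abs, ← Rat.norm_cast_real, Real.norm_eq_abs]

protected lemma map_zero (hp : IsRatNorm p) : p 0 = 0 := (hp.eq_zero_iff 0).2 rfl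

lemma dist_le_sub (hp : IsRatNorm p) (v w : ℕ →₀ ℚ) : dist (p v : ℝ) (p w) ≤ p (v - w) :=
  abs_sub_map_le_sub hp.toSeminorm v w

lemma smul_sub_smul_le (hp : IsRatNorm p) (a b : ℚ) (v w : ℕ →₀ ℚ) :
    p (a • v - b • w) ≤ |a| * p (v - w) + |a - b| * p w := by
  have hsplit : a • v - b • w = a • (v - w) + (a - b) • w := by
    rw [smul_sub, sub_smul, sub_add_sub_cancel]
  rw [hsplit, ← hp.smul_eq, ← hp.smul_eq]
  exact hp.add_le _ _

lemma isCauchyWrt_iff_tendsto (hp : IsRatNorm p) {v : ℕ → ℕ →₀ ℚ} :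
    IsCauchyWrt p v ↔ Tendsto (fun k : ℕ × ℕ => (p (v k.1 - v k.2) : ℝ)) atTop (𝓝 0) := by
  rw [← Rat.cast_zero, tendsto_ratCast_iff]
  simp only [sub_zero, abs_of_nonneg (hp.nonneg _), eventually_atTop_prod_self, IsCauchyWrt]

end IsRatNorm

namespace IsCauchyWrt

variable {p : (ℕ →₀ ℚ) → ℚ} {v : ℕ → ℕ →₀ ℚ}

lemma exists_tendsto_norm (hv : IsCauchyWrt p v) (hp : IsRatNorm p) :
    ∃ r : ℝ, Tendsto (fun k => (p (v k) : ℝ)) atTop (𝓝 r) := by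
  refine cauchySeq_tendsto_of_complete (cauchySeq_iff_tendsto_dist_atTop_0.2 ?_)
  exact squeeze_zero (fun _ => dist_nonneg) (fun k => hp.dist_le_sub (v k.1) (v k.2))
    (hp.isCauchyWrt_iff_tendsto.1 hv)

lemma smul (hv : IsCauchyWrt p v) (hp : IsRatNorm p) {c : ℕ → ℚ}
    (hc : CauchySeq fun k => (c k : ℝ)) : IsCauchyWrt p fun k => c k • v k := by
  obtain ⟨r, hr⟩ := hv.exists_tendsto_norm hp
  obtain ⟨a, ha⟩ := cauchySeq_tendsto_of_complete hc
  have hbound : Tendsto (fun k : ℕ × ℕ => |(c k.1 : ℝ)| * p (v k.1 - v k.2) +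
      dist (c k.1 : ℝ) (c k.2) * p (v k.2)) atTop (𝓝 (|a| * 0 + 0 * r)) := by
    have hfst : Tendsto Prod.fst (atTop : Filter (ℕ × ℕ)) atTop :=
      prod_atTop_atTop_eq (α := ℕ) (β := ℕ) ▸ tendsto_fst
    have hsnd : Tendsto Prod.snd (atTop : Filter (ℕ × ℕ)) atTop :=
      prod_atTop_atTop_eq (α := ℕ) (β := ℕ) ▸ tendsto_snd
    exact ((ha.comp hfst).abs.mul (hp.isCauchyWrt_iff_tendsto.1 hv)).add
      ((cauchySeq_iff_tendsto_dist_atTop_0.1 hc).mul (hr.comp hsnd))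
  rw [mul_zero, zero_mul, add_zero] at hbound
  refine hp.isCauchyWrt_iff_tendsto.2 (squeeze_zero (fun k => ?_) (fun k => ?_) hbound)
  · exact_mod_cast hp.nonneg _
  · rw [Real.dist_eq]
    exact_mod_cast hp.smul_sub_smul_le _ _ _ _

end IsCauchyWrt

namespace Xspace

/-- The norm `p` of a point `(p, F)` of `X`. -/
def ratNorm (x : Xspace) : (ℕ →₀ ℚ) → ℚ := x.val.1

/-- The functional `F` of a point `(p, F)` of `X`, bundled as a linear map. -/
noncomputable def functional (x : Xspace) : (ℕ →₀ ℚ) →ₗ[ℚ] ℚ := x.property.2.1.mk'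

lemma isRatNorm (x : Xspace) : IsRatNorm x.ratNorm := x.property.1

lemma abs_functional_le (x : Xspace) (v : ℕ →₀ ℚ) : |x.functional v| ≤ x.ratNorm v :=
  x.property.2.2 v

lemma continuous_ratNorm (v : ℕ →₀ ℚ) : Continuous fun x : Xspace => x.ratNorm v :=
  (continuous_apply v).comp (continuous_fst.comp continuous_subtype_val)

lemma continuous_functional (v : ℕ →₀ ℚ) : Continuous fun x : Xspace => x.functional v :=
  (continuous_apply v).comp (continuous_snd.comp continuous_subtype_val)

lemma mem_Yset_iff_tendsto_one (x : Xspace) :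
    x ∈ Yset ↔ ∃ v : ℕ → ℕ →₀ ℚ, IsCauchyWrt x.ratNorm v ∧
      Tendsto (fun k => (x.ratNorm (v k) : ℝ)) atTop (𝓝 1) ∧
      Tendsto (fun k => (x.functional (v k) : ℝ)) atTop (𝓝 1) := by
  simp only [← Rat.cast_one (α := ℝ), tendsto_ratCast_iff, eventually_atTop]
  rfl

/-- A sequence with a nonzero limit is normalized to `(p (v k))⁻¹ • v k`. -/
lemma mem_Yset_iff_tendsto_ne_zero (x : Xspace) :
    x ∈ Yset ↔ ∃ v : ℕ → ℕ →₀ ℚ, IsCauchyWrt x.ratNorm v ∧ ∃ r : ℝ, r ≠ 0 ∧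
      Tendsto (fun k => (x.ratNorm (v k) : ℝ)) atTop (𝓝 r) ∧
      Tendsto (fun k => (x.functional (v k) : ℝ)) atTop (𝓝 r) := by
  rw [mem_Yset_iff_tendsto_one]
  refine ⟨fun ⟨v, hv, hp, hF⟩ => ⟨v, hv, 1, one_ne_zero, hp, hF⟩, ?_⟩
  rintro ⟨v, hv, r, hr, hp, hF⟩
  have hc : Tendsto (fun k => (((x.ratNorm (v k))⁻¹ : ℚ) : ℝ)) atTop (𝓝 r⁻¹) := by
    simpa only [Rat.cast_inv] using hp.inv₀ hr
  have hr_nonneg : 0 ≤ r := ge_of_tendsto' hp fun k => by exact_mod_cast x.isRatNorm.nonneg _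
  refine ⟨_, hv.smul x.isRatNorm hc.cauchySeq, ?_, ?_⟩
  · simpa only [x.isRatNorm.smul_eq, Rat.cast_mul, Rat.cast_abs,
      abs_of_nonneg (inv_nonneg.2 hr_nonneg), inv_mul_cancel₀ hr] using hc.abs.mul hp
  · simpa only [map_smul, smul_eq_mul, Rat.cast_mul, inv_mul_cancel₀ hr] using hc.mul hF

section L1Sum

variable {ι : Type*} (e : (ℕ →₀ ℚ) ≃ₗ[ℚ] (ι →₀ ℕ →₀ ℚ)) (x : ι → Xspace)

/-- The norm of the `ℓ¹`-sum of a family `(p i, F i)` of points of `X`, transported to `N` along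
an identification `e` of `N` with the direct sum of copies of `N`. -/
noncomputable def l1Norm (v : ℕ →₀ ℚ) : ℚ := (e v).sum fun i w => (x i).ratNorm w

/-- The functional on the `ℓ¹`-sum of a family `(p i, F i)` of points of `X` that restricts to
`F i` on the `i`-th summand, transported to `N` along `e`. -/
noncomputable def l1Functional : (ℕ →₀ ℚ) →ₗ[ℚ] ℚ :=
  Finsupp.lsum ℚ (fun i => (x i).functional) ∘ₗ e.toLinearMap

lemma l1Norm_eq_sum {v : ℕ →₀ ℚ} {s : Finset ι} (hs : (e v).support ⊆ s) :
    l1Norm e x v = ∑ i ∈ s, (x i).ratNorm (e v i) :=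
  Finsupp.sum_of_support_subset _ hs _ fun i _ => (x i).isRatNorm.map_zero

lemma l1Functional_eq_sum {v : ℕ →₀ ℚ} {s : Finset ι} (hs : (e v).support ⊆ s) :
    l1Functional e x v = ∑ i ∈ s, (x i).functional (e v i) :=
  Finsupp.sum_of_support_subset _ hs _ fun i _ => map_zero (x i).functional

lemma l1Norm_symm_single (i : ι) (w : ℕ →₀ ℚ) :
    l1Norm e x (e.symm (Finsupp.single i w)) = (x i).ratNorm w := by
  rw [l1Norm, e.apply_symm_apply]
  exact Finsupp.sum_single_index (h := fun i w => (x i).ratNorm w) (x i).isRatNorm.map_zero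

lemma l1Functional_symm_single (i : ι) (w : ℕ →₀ ℚ) :
    l1Functional e x (e.symm (Finsupp.single i w)) = (x i).functional w := by
  simp [l1Functional]

lemma sum_le_l1Norm (v : ℕ →₀ ℚ) (s : Finset ι) :
    ∑ i ∈ s, (x i).ratNorm (e v i) ≤ l1Norm e x v := by
  classical
  rw [l1Norm_eq_sum e x (Finset.subset_union_right (s₁ := s))]
  exact Finset.sum_le_sum_of_subset_of_nonneg Finset.subset_union_left
    fun i _ _ => (x i).isRatNorm.nonneg _

lemma ratNorm_apply_le_l1Norm (v : ℕ →₀ ℚ) (i : ι) : (x i).ratNorm (e v i) ≤ l1Norm e x v := by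
  simpa using sum_le_l1Norm e x v {i}

lemma ratNorm_sub_functional_apply_le (v : ℕ →₀ ℚ) (i : ι) :
    (x i).ratNorm (e v i) - (x i).functional (e v i) ≤ l1Norm e x v - l1Functional e x v := by
  classical
  have hs : (e v).support ⊆ insert i (e v).support := Finset.subset_insert _ _
  rw [l1Norm_eq_sum e x hs, l1Functional_eq_sum e x hs, ← Finset.sum_sub_distrib]
  exact Finset.single_le_sum
    (f := fun j => (x j).ratNorm (e v j) - (x j).functional (e v j))
    (fun j _ => sub_nonneg.2 (le_of_abs_le ((x j).abs_functional_le _)))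
    (Finset.mem_insert_self _ _)

/-- Off the support of `w` the components of `v` and `v - w` agree. -/
lemma l1Norm_le_add_sum_support (v w : ℕ →₀ ℚ) :
    l1Norm e x v ≤ l1Norm e x (v - w) + ∑ i ∈ (e w).support, (x i).ratNorm (e v i) := by
  classical
  rw [l1Norm_eq_sum e x (Finset.subset_union_left (s₂ := (e w).support)),
    ← Finset.sum_sdiff (Finset.subset_union_right (s₁ := (e v).support))]
  gcongr
  refine le_trans (Finset.sum_le_sum fun i hi => ?_)
    (sum_le_l1Norm e x (v - w) (((e v).support ∪ (e w).support) \ (e w).support))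
  rw [map_sub, Finsupp.sub_apply, Finsupp.notMem_support_iff.1 (Finset.mem_sdiff.1 hi).2, sub_zero]

lemma isRatNorm_l1Norm : IsRatNorm (l1Norm e x) where
  nonneg v := Finset.sum_nonneg fun i _ => (x i).isRatNorm.nonneg _
  eq_zero_iff v := by
    refine ⟨fun h => e.map_eq_zero_iff.1 (Finsupp.ext fun i => ?_), fun h => by simp [h, l1Norm]⟩
    exact ((x i).isRatNorm.eq_zero_iff _).1
      (le_antisymm (h ▸ ratNorm_apply_le_l1Norm e x v i) ((x i).isRatNorm.nonneg _))
  smul_eq q v := by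
    have hs : (e (q • v)).support ⊆ (e v).support := by
      rw [map_smul]
      exact Finsupp.support_smul
    simp only [l1Norm_eq_sum e x hs, l1Norm_eq_sum e x subset_rfl, map_smul, Finsupp.smul_apply,
      (x _).isRatNorm.smul_eq, Finset.mul_sum]
  add_le v w := by
    classical
    have hs : (e (v + w)).support ⊆ (e v).support ∪ (e w).support := by
      rw [map_add]
      exact Finsupp.support_add
    rw [l1Norm_eq_sum e x hs, l1Norm_eq_sum e x Finset.subset_union_left,
      l1Norm_eq_sum e x (Finset.subset_union_right (s₁ := (e v).support)),
      ← Finset.sum_add_distrib]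
    refine Finset.sum_le_sum fun i _ => ?_
    rw [map_add, Finsupp.add_apply]
    exact (x i).isRatNorm.add_le _ _

lemma abs_l1Functional_le (v : ℕ →₀ ℚ) : |l1Functional e x v| ≤ l1Norm e x v :=
  (Finset.abs_sum_le_sum_abs _ _).trans (Finset.sum_le_sum fun i _ => (x i).abs_functional_le _)

/-- The `ℓ¹`-sum of a family of points of `X`, as a point of `X`. -/
noncomputable def l1Sum : Xspace :=
  ⟨(l1Norm e x, l1Functional e x), isRatNorm_l1Norm e x, (l1Functional e x).isLinear,
    abs_l1Functional_le e x⟩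

lemma ratNorm_l1Sum : (l1Sum e x).ratNorm = l1Norm e x := rfl

lemma functional_l1Sum : (l1Sum e x).functional = l1Functional e x := rfl

lemma continuous_l1Sum : Continuous (l1Sum e) := by
  have : DiscreteTopology ℚ := ⟨rfl⟩
  refine (Continuous.prodMk (continuous_pi fun v => ?_) (continuous_pi fun v => ?_)).subtype_mk _
  · exact continuous_finsetSum _ fun i _ => (continuous_ratNorm (e v i)).comp (continuous_apply i)
  · exact continuous_finsetSum _ fun i _ =>
      (continuous_functional (e v i)).comp (continuous_apply i)

variable {e x} {v : ℕ → ℕ →₀ ℚ}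

lemma isCauchyWrt_apply (hv : IsCauchyWrt (l1Norm e x) v) (i : ι) :
    IsCauchyWrt (x i).ratNorm fun k => e (v k) i := fun ε hε => by
  obtain ⟨K, hK⟩ := hv ε hε
  refine ⟨K, fun m k hm hk => lt_of_le_of_lt ?_ (hK m k hm hk)⟩
  simpa only [map_sub, Finsupp.sub_apply] using ratNorm_apply_le_l1Norm e x (v m - v k) i

lemma tendsto_l1Norm_zero_of_tendsto_apply (hv : IsCauchyWrt (l1Norm e x) v)
    (h : ∀ i, Tendsto (fun k => ((x i).ratNorm (e (v k) i) : ℝ)) atTop (𝓝 0)) :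
    Tendsto (fun k => (l1Norm e x (v k) : ℝ)) atTop (𝓝 0) := by
  rw [← Rat.cast_zero, tendsto_ratCast_iff]
  intro ε hε
  obtain ⟨K, hK⟩ := hv (ε / 2) (half_pos hε)
  have hsum : Tendsto (fun k => ((∑ i ∈ (e (v K)).support, (x i).ratNorm (e (v k) i) : ℚ) : ℝ))
      atTop (𝓝 ((0 : ℚ) : ℝ)) := by
    simpa using tendsto_finsetSum (e (v K)).support fun i _ => h i
  filter_upwards [tendsto_ratCast_iff.1 hsum (ε / 2) (half_pos hε), eventually_ge_atTop K]
    with k hk_sum hKk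
  rw [sub_zero] at hk_sum ⊢
  rw [abs_of_nonneg ((isRatNorm_l1Norm e x).nonneg _)]
  linarith [l1Norm_le_add_sum_support e x (v k) (v K), hK k K hKk le_rfl, lt_of_abs_lt hk_sum]

lemma tendsto_functional_apply {i : ι} {r s : ℝ}
    (hp : Tendsto (fun k => (l1Norm e x (v k) : ℝ)) atTop (𝓝 r))
    (hF : Tendsto (fun k => (l1Functional e x (v k) : ℝ)) atTop (𝓝 r))
    (hi : Tendsto (fun k => ((x i).ratNorm (e (v k) i) : ℝ)) atTop (𝓝 s)) :
    Tendsto (fun k => ((x i).functional (e (v k) i) : ℝ)) atTop (𝓝 s) := by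
  have hgap : Tendsto (fun k => ((x i).ratNorm (e (v k) i) : ℝ) - (x i).functional (e (v k) i))
      atTop (𝓝 0) := by
    refine squeeze_zero (fun k => ?_) (fun k => ?_) (sub_self r ▸ hp.sub hF)
    · exact sub_nonneg.2 (by exact_mod_cast le_of_abs_le ((x i).abs_functional_le _))
    · exact_mod_cast ratNorm_sub_functional_apply_le e x (v k) i
  simpa only [sub_sub_cancel, sub_zero] using hi.sub hgap

variable (e x)

lemma l1Sum_mem_Yset_of_mem {i : ι} (h : x i ∈ Yset) : l1Sum e x ∈ Yset := by
  rw [mem_Yset_iff_tendsto_one] at h ⊢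
  obtain ⟨v, hv, hp, hF⟩ := h
  rw [ratNorm_l1Sum, functional_l1Sum]
  refine ⟨fun k => e.symm (Finsupp.single i (v k)), fun ε hε => ?_, ?_, ?_⟩
  · simpa only [← map_sub, ← Finsupp.single_sub, l1Norm_symm_single] using hv ε hε
  · simpa only [l1Norm_symm_single] using hp
  · simpa only [l1Functional_symm_single] using hF

lemma exists_mem_Yset_of_l1Sum_mem (h : l1Sum e x ∈ Yset) : ∃ i, x i ∈ Yset := by
  rw [mem_Yset_iff_tendsto_one, ratNorm_l1Sum, functional_l1Sum] at h
  obtain ⟨v, hv, hp, hF⟩ := h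
  have hcauchy := isCauchyWrt_apply hv
  choose s hs using fun i => (hcauchy i).exists_tendsto_norm (x i).isRatNorm
  obtain ⟨i, hi⟩ : ∃ i, s i ≠ 0 := by
    by_contra! hzero
    have hlim := tendsto_l1Norm_zero_of_tendsto_apply hv fun i => hzero i ▸ hs i
    exact one_ne_zero (tendsto_nhds_unique hp hlim)
  exact ⟨i, (mem_Yset_iff_tendsto_ne_zero _).2
    ⟨_, hcauchy i, s i, hi, hs i, tendsto_functional_apply hp hF (hs i)⟩⟩

lemma l1Sum_mem_Yset_iff : l1Sum e x ∈ Yset ↔ ∃ i, x i ∈ Yset :=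
  ⟨exists_mem_Yset_of_l1Sum_mem e x, fun ⟨_, hi⟩ => l1Sum_mem_Yset_of_mem e x hi⟩

end L1Sum

end Xspace

lemma nonempty_linearEquiv_finsupp_finsupp (R ι κ : Type*) [Semiring R] [Countable ι] [Nonempty ι]
    [Countable κ] [Infinite κ] : Nonempty ((κ →₀ R) ≃ₗ[R] (ι →₀ κ →₀ R)) := by
  obtain ⟨f⟩ := nonempty_equiv_of_countable (α := κ) (β := ι × κ)
  exact ⟨(Finsupp.domLCongr f).trans (Finsupp.curryLinearEquiv R)⟩

theorem stmt8_general {Z ι : Type*} [TopologicalSpace Z] [Countable ι] [Nonempty ι]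
    (C : ι → Set Z)
    (hC : ∀ i, ∃ φ : Z → Xspace, Continuous φ ∧ ∀ z, z ∈ C i ↔ φ z ∈ Yset) :
    ∃ φ : Z → Xspace, Continuous φ ∧ ∀ z, z ∈ ⋃ i, C i ↔ φ z ∈ Yset := by
  choose φ hφ hmem using hC
  obtain ⟨e⟩ := nonempty_linearEquiv_finsupp_finsupp ℚ ι ℕ
  refine ⟨fun z => Xspace.l1Sum e fun i => φ i z,
    (Xspace.continuous_l1Sum e).comp (continuous_pi hφ), fun z => ?_⟩
  rw [Set.mem_iUnion, Xspace.l1Sum_mem_Yset_iff]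
  exact exists_congr fun i => hmem i z

/-- The class of subsets of Baire space continuously reducible to `Y` is closed under
countable unions. -/
theorem stmt8 (C : ℕ → Set (ℕ → ℕ)) (hC : ∀ n, ContReducibleToY (C n)) :
    ContReducibleToY (⋃ n, C n) :=
  stmt8_general C hC
end

section
/- Every Borel subset C of Baire space ℕ^ℕ is continuously reducible to Y: there is a continuous map φ : ℕ^ℕ → X such that for all x ∈ ℕ^ℕ, x ∈ C if and only if φ(x) ∈ Y. -/
/-!
To a suffix-closed set `T` of words, read as a tree in which a word grows at its head, we attach
the norm `‖v‖ = ∑ₛ 2^(-|s|-1) |m s| + ∑ₛ w s |v s|` on finitely supported functions `v` of words,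
where `m s` is the sum of `v` over all words extending `s`, and `w s` is `2^(-|s|)` for `s ∈ T` and
`1` for `s ∉ T`. Since `∑ₛ v s = ∑ₛ 2^(-|s|-1) m s + ∑ₛ 2^(-|s|-1) v s`, the functional
`F v = ∑ₛ v s` is dominated by the norm, with defect `‖v‖ - F v` at least half of `∑ₛ w s |v s|`.

If `F` attains its norm along a Cauchy sequence, the defect tends to `0`. All coefficients then
vanish in the limit, and so does the mass `m s` of every `s ∉ T`. By Kirchhoff's law
`m s = v s + ∑ₐ m (a :: s)`, and as a Cauchy sequence loses no mass at infinity, every word whose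
mass does not vanish in the limit has such a child. The empty word has limit mass `1`, so `T` has
an infinite branch. Conversely the point masses along a branch form a norming Cauchy sequence.

An analytic set is the range of a continuous map `f`, and `x` lies in it if and only if the tree
of finite approximations to a solution of `f y = x` has a branch.
-/

namespace NormAttaining

open Filter Finsupp PiNat Topology

section AttainsNorm

/-- The functional `F` attains its norm in the completion of `(V, p)`: there is a `p`-Cauchy
sequence along which both `p` and `F` tend to `1`. -/
def AttainsNorm {V K : Type*} [AddGroup V] [Zero K] [One K] [TopologicalSpace K]
    (p F : V → K) : Prop :=
  ∃ v : ℕ → V, Tendsto (fun mk : ℕ × ℕ => p (v mk.1 - v mk.2)) (atTop ×ˢ atTop) (𝓝 0) ∧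
    Tendsto (fun k => p (v k)) atTop (𝓝 1) ∧ Tendsto (fun k => F (v k)) atTop (𝓝 1)

lemma attainsNorm_comp_addEquiv {V W K : Type*} [AddGroup V] [AddGroup W] [Zero K] [One K]
    [TopologicalSpace K] (e : V ≃+ W) (p F : W → K) :
    AttainsNorm (p ∘ e) (F ∘ e) ↔ AttainsNorm p F := by
  constructor
  · rintro ⟨v, hcauchy, hp, hF⟩
    exact ⟨e ∘ v, by simpa using hcauchy, hp, hF⟩
  · rintro ⟨v, hcauchy, hp, hF⟩
    exact ⟨e.symm ∘ v, by simpa using hcauchy, by simpa using hp, by simpa using hF⟩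

end AttainsNorm

lemma tendsto_zero_of_abs_le {K J : Type*} [AddCommGroup K] [LinearOrder K]
    [IsOrderedAddMonoid K] [TopologicalSpace K] [OrderTopology K] {l : Filter J} {f g : J → K}
    (hg : Tendsto g l (𝓝 0)) (h : ∀ i, |f i| ≤ g i) : Tendsto f l (𝓝 0) :=
  tendsto_of_tendsto_of_tendsto_of_le_of_le (by simpa using hg.neg) hg
    (fun i => neg_le_of_abs_le (h i)) fun i => le_of_abs_le (h i)

section WeightedSum

variable {ι κ K : Type*} [CommRing K] [LinearOrder K]

/-- The weighted `ℓ¹` norm of a finitely supported function. -/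
def weightedSum (w : ι → K) (v : ι →₀ K) : K := v.sum fun i q => w i * |q|

@[simp]
lemma weightedSum_zero (w : ι → K) : weightedSum w 0 = 0 := Finsupp.sum_zero_index

lemma weightedSum_mul_left (c : K) (w : ι → K) (v : ι →₀ K) :
    weightedSum (fun i => c * w i) v = c * weightedSum w v := by
  simp only [weightedSum, Finsupp.sum, Finset.mul_sum, mul_assoc]

variable [IsStrictOrderedRing K] {w w' : ι → K}

lemma weightedSum_eq_sum_of_subset (w : ι → K) (v : ι →₀ K) {s : Finset ι}
    (h : v.support ⊆ s) : weightedSum w v = ∑ i ∈ s, w i * |v i| :=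
  Finsupp.sum_of_support_subset v h _ (by simp)

@[simp]
lemma weightedSum_single (w : ι → K) (i : ι) (q : K) :
    weightedSum w (single i q) = w i * |q| :=
  Finsupp.sum_single_index (by simp)

lemma weightedSum_nonneg (hw : ∀ i, 0 ≤ w i) (v : ι →₀ K) : 0 ≤ weightedSum w v :=
  Finset.sum_nonneg fun i _ => mul_nonneg (hw i) (abs_nonneg _)

lemma mul_abs_apply_le_weightedSum (hw : ∀ i, 0 ≤ w i) (v : ι →₀ K) (i : ι) :
    w i * |v i| ≤ weightedSum w v := by
  classical
  rw [weightedSum_eq_sum_of_subset w v (Finset.subset_insert i _)]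
  exact Finset.single_le_sum (f := fun j => w j * |v j|)
    (fun j _ => mul_nonneg (hw j) (abs_nonneg _)) (Finset.mem_insert_self i _)

lemma weightedSum_eq_zero_iff (hw : ∀ i, 0 < w i) {v : ι →₀ K} :
    weightedSum w v = 0 ↔ v = 0 := by
  refine ⟨fun h => ?_, by rintro rfl; simp⟩
  ext i
  have hi := mul_abs_apply_le_weightedSum (fun j => (hw j).le) v i
  exact abs_nonpos_iff.1 (nonpos_of_mul_nonpos_right (hi.trans_eq h) (hw i))

lemma weightedSum_add_le (hw : ∀ i, 0 ≤ w i) (u v : ι →₀ K) :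
    weightedSum w (u + v) ≤ weightedSum w u + weightedSum w v := by
  classical
  rw [weightedSum_eq_sum_of_subset w (u + v) Finsupp.support_add,
    weightedSum_eq_sum_of_subset w u Finset.subset_union_left,
    weightedSum_eq_sum_of_subset w v Finset.subset_union_right, ← Finset.sum_add_distrib]
  gcongr with i
  rw [← mul_add]
  exact mul_le_mul_of_nonneg_left (abs_add_le _ _) (hw i)

lemma weightedSum_smul (w : ι → K) (q : K) (v : ι →₀ K) :
    weightedSum w (q • v) = |q| * weightedSum w v := by
  rw [weightedSum_eq_sum_of_subset w (q • v) Finsupp.support_smul, weightedSum, Finsupp.sum,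
    Finset.mul_sum]
  refine Finset.sum_congr rfl fun i _ => ?_
  rw [Finsupp.smul_apply, smul_eq_mul, abs_mul, mul_left_comm]

lemma weightedSum_sub_le (hw : ∀ i, 0 ≤ w i) (u v : ι →₀ K) :
    weightedSum w (u - v) ≤ weightedSum w u + weightedSum w v := by
  have hneg : weightedSum w (-v) = weightedSum w v := by simpa using weightedSum_smul w (-1) v
  rw [sub_eq_add_neg, ← hneg]
  exact weightedSum_add_le hw u (-v)

lemma weightedSum_mono (h : ∀ i, w i ≤ w' i) (v : ι →₀ K) :
    weightedSum w v ≤ weightedSum w' v :=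
  Finset.sum_le_sum fun i _ => mul_le_mul_of_nonneg_right (h i) (abs_nonneg _)

lemma abs_linearCombination_le {f : ι → K} (h : ∀ i, |f i| ≤ w i) (v : ι →₀ K) :
    |linearCombination K f v| ≤ weightedSum w v := by
  rw [linearCombination_apply]
  refine (Finset.abs_sum_le_sum_abs _ _).trans (Finset.sum_le_sum fun i _ => ?_)
  calc |v i * f i| = |f i| * |v i| := by rw [abs_mul, mul_comm]
    _ ≤ w i * |v i| := mul_le_mul_of_nonneg_right (h i) (abs_nonneg _)

lemma weightedSum_lcomapDomain_le (hw : ∀ i, 0 ≤ w i) {f : κ → ι} (hf : f.Injective)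
    (v : ι →₀ K) : weightedSum (w ∘ f) (lcomapDomain (R := K) f hf v) ≤ weightedSum w v := by
  classical
  calc weightedSum (w ∘ f) (lcomapDomain (R := K) f hf v)
      = ∑ i ∈ v.support with i ∈ Set.range f, w i * |v i| :=
        Finset.sum_preimage' f v.support hf.injOn fun i => w i * |v i|
    _ ≤ weightedSum w v :=
        Finset.sum_le_sum_of_subset_of_nonneg (Finset.filter_subset _ _)
          fun i _ _ => mul_nonneg (hw i) (abs_nonneg _)

lemma weightedSum_le_weightedSum_sub_add_sum (hw : ∀ i, 0 ≤ w i) (u v : ι →₀ K) :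
    weightedSum w u ≤ weightedSum w (u - v) + ∑ i ∈ v.support, w i * |u i| := by
  classical
  have hsupport : ∑ i ∈ v.support, w i * |u i| =
      ∑ i ∈ u.support ∪ v.support, if i ∈ v.support then w i * |u i| else 0 := by
    rw [← Finset.sum_filter, Finset.filter_mem_eq_inter,
      Finset.inter_eq_right.2 Finset.subset_union_right]
  rw [weightedSum_eq_sum_of_subset w u Finset.subset_union_left,
    weightedSum_eq_sum_of_subset w (u - v) Finsupp.support_sub, hsupport,
    ← Finset.sum_add_distrib]
  gcongr with i
  by_cases hi : i ∈ v.support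
  · rw [if_pos hi]
    exact le_add_of_nonneg_left (mul_nonneg (hw i) (abs_nonneg _))
  · rw [if_neg hi, add_zero, Finsupp.sub_apply, Finsupp.notMem_support_iff.1 hi, sub_zero]

/- Outside the finite support of a far-out term `u k`, every later `u m` agrees with `u m - u k`,
which is small. -/
lemma tendsto_weightedSum_zero {K J : Type*} [Field K] [LinearOrder K] [IsStrictOrderedRing K]
    [TopologicalSpace K] [OrderTopology K] {w : ι → K} (hw : ∀ i, 0 ≤ w i) {l : Filter J}
    [l.NeBot] {u : J → ι →₀ K}
    (hcauchy : Tendsto (fun mk : J × J => weightedSum w (u mk.1 - u mk.2)) (l ×ˢ l) (𝓝 0))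
    (hu : ∀ i, Tendsto (fun k => u k i) l (𝓝 0)) :
    Tendsto (fun k => weightedSum w (u k)) l (𝓝 0) := by
  refine LinearOrderedAddCommGroup.tendsto_nhds.2 fun ε hε => ?_
  obtain ⟨k, hk⟩ :=
    ((tendsto_order.1 (hcauchy.comp tendsto_prod_swap)).2 _ (half_pos hε)).curry.exists
  have hsum : Tendsto (fun m => ∑ i ∈ (u k).support, w i * |u m i|) l (𝓝 0) := by
    simpa using tendsto_finsetSum (u k).support fun i _ => (hu i).abs.const_mul (w i)
  filter_upwards [hk, (tendsto_order.1 hsum).2 _ (half_pos hε)] with m hm hm'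
  rw [sub_zero, abs_of_nonneg (weightedSum_nonneg hw _), ← add_halves ε]
  exact (weightedSum_le_weightedSum_sub_add_sum hw (u m) (u k)).trans_lt (add_lt_add hm hm')

end WeightedSum

section Mass

variable {α ι K : Type*}

/-- The sum of the values of a finitely supported function, as a linear functional. -/
noncomputable def total [Semiring K] : (ι →₀ K) →ₗ[K] K := linearCombination K 1

/-- The linear map sending `v` to the function `s ↦ ∑ v t`, the sum being over all words `t` that
have `s` as a suffix. -/
noncomputable def mass [Semiring K] : (List α →₀ K) →ₗ[K] List α →₀ K :=
  linearCombination K fun t => (t.tails.map fun s => single s 1).sum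

lemma cons_left_injective (s : List α) : Function.Injective fun a => a :: s :=
  fun _ _ h => List.head_eq_of_cons_eq h

/-- The masses of the children `a :: s` of a word `s`. -/
noncomputable def childMass [Semiring K] (s : List α) : (List α →₀ K) →ₗ[K] α →₀ K :=
  lcomapDomain _ (cons_left_injective s) ∘ₗ mass

variable [Semiring K]

@[simp]
lemma total_single (i : ι) (q : K) : total (single i q) = q := by
  simp [total]

lemma abs_total_le_weightedSum_one {K : Type*} [CommRing K] [LinearOrder K]
    [IsStrictOrderedRing K] (v : ι →₀ K) : |total v| ≤ weightedSum 1 v :=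
  abs_linearCombination_le (by simp) v

lemma mass_single_nil : mass (single [] (1 : K)) = single ([] : List α) 1 := by
  simp [mass]

lemma mass_single_cons (a : α) (t : List α) :
    mass (single (a :: t) (1 : K)) = single (a :: t) 1 + mass (single t 1) := by
  simp [mass]

@[simp]
lemma childMass_apply (s : List α) (v : List α →₀ K) (a : α) :
    childMass s v a = mass v (a :: s) := by
  simp [childMass]

lemma mass_apply (v : List α →₀ K) (s : List α) :
    mass v s = linearCombination K ({t | s <:+ t}.indicator 1) v := by
  classical
  suffices h : lapply s ∘ₗ mass (K := K) = linearCombination K ({t | s <:+ t}.indicator 1) from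
    LinearMap.congr_fun h v
  ext t
  simp only [LinearMap.comp_apply, lsingle_apply, lapply_apply, linearCombination_single, one_smul]
  induction t with
  | nil => simp [mass_single_nil, Finsupp.single_apply, Set.indicator_apply, eq_comm]
  | cons a t ih =>
    rw [mass_single_cons, Finsupp.add_apply, ih]
    by_cases h : s = a :: t
    · subst h
      have : ¬ a :: t <:+ t := fun h => by simpa using h.length_le
      simp [this]
    · simp [Set.indicator_apply, List.suffix_cons_iff, h]

lemma mass_nil (v : List α →₀ K) : mass v [] = total v := by
  simp [mass_apply, total]

lemma mass_eq_add_total_childMass (v : List α →₀ K) (s : List α) :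
    mass v s = v s + total (childMass s v) := by
  classical
  suffices h : lapply s ∘ₗ mass = lapply s + total ∘ₗ childMass (K := K) s from
    LinearMap.congr_fun h v
  ext t
  simp only [LinearMap.comp_apply, LinearMap.add_apply, lsingle_apply, lapply_apply]
  induction t with
  | nil =>
    have hchild : childMass s (single [] (1 : K)) = 0 := by
      ext a
      simp [mass_single_nil]
    rw [mass_single_nil, hchild, map_zero, add_zero]
  | cons b t ih =>
    have hchild : childMass s (single (b :: t) (1 : K)) =
        single b (single t 1 s) + childMass s (single t 1) := by
      ext a
      simp only [childMass_apply, mass_single_cons, Finsupp.add_apply, Finsupp.single_apply,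
        List.cons.injEq, ite_and]
    rw [mass_single_cons, Finsupp.add_apply, ih, hchild, map_add, total_single]

end Mass

section TreeNorm

variable {α K : Type*} [Field K] [LinearOrder K]

/-- A tree of words over `α`, namely a set closed under suffixes: a word grows at its head, as in
`PiNat.res`. -/
def IsTree (T : Set (List α)) : Prop := ∀ ⦃s t⦄, s <:+ t → t ∈ T → s ∈ T

/-- The weight `2 ^ (-|s| - 1)` that the tree norm gives to the mass of a word `s`. -/
def levelWeight (s : List α) : K := (1 / 2) ^ (s.length + 1)

open Classical in
/-- The weight that the norm of a tree `T` gives to the coefficient of a word: `2 ^ (-|s|)` for a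
word `s` in `T`, and `1` outside `T`. -/
noncomputable def nodeWeight (T : Set (List α)) (s : List α) : K :=
  if s ∈ T then 2 * levelWeight s else 1

/-- The norm on finitely supported functions of words that encodes a tree `T`. -/
noncomputable def treeNorm (T : Set (List α)) (v : List α →₀ K) : K :=
  weightedSum levelWeight (mass v) + weightedSum (nodeWeight T) v

variable [IsStrictOrderedRing K]

lemma levelWeight_pos (s : List α) : 0 < (levelWeight s : K) := by
  unfold levelWeight
  positivity

lemma levelWeight_nonneg (s : List α) : 0 ≤ (levelWeight s : K) := (levelWeight_pos s).le

lemma two_mul_levelWeight_cons (a : α) (s : List α) :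
    2 * levelWeight (a :: s) = (levelWeight s : K) := by
  simp only [levelWeight, List.length_cons]
  ring

lemma two_mul_levelWeight_le_nodeWeight (T : Set (List α)) (s : List α) :
    2 * levelWeight s ≤ (nodeWeight T s : K) := by
  unfold nodeWeight
  split_ifs
  · rfl
  · have hpow : (1 / 2 : K) ^ s.length ≤ 1 := pow_le_one₀ (by norm_num) (by norm_num)
    rw [levelWeight, pow_succ]
    linarith

lemma nodeWeight_pos (T : Set (List α)) (s : List α) : 0 < (nodeWeight T s : K) :=
  (mul_pos two_pos (levelWeight_pos s)).trans_le (two_mul_levelWeight_le_nodeWeight T s)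

lemma nodeWeight_nonneg (T : Set (List α)) (s : List α) : 0 ≤ (nodeWeight T s : K) :=
  (nodeWeight_pos T s).le

lemma treeNorm_nonneg (T : Set (List α)) (v : List α →₀ K) : 0 ≤ treeNorm T v :=
  add_nonneg (weightedSum_nonneg levelWeight_nonneg _) (weightedSum_nonneg (nodeWeight_nonneg T) _)

lemma treeNorm_eq_zero_iff (T : Set (List α)) (v : List α →₀ K) : treeNorm T v = 0 ↔ v = 0 := by
  rw [treeNorm, add_eq_zero_iff_of_nonneg (weightedSum_nonneg levelWeight_nonneg _)
    (weightedSum_nonneg (nodeWeight_nonneg T) _), weightedSum_eq_zero_iff levelWeight_pos,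
    weightedSum_eq_zero_iff (nodeWeight_pos T), and_iff_right_of_imp (by rintro rfl; simp)]

lemma treeNorm_smul (T : Set (List α)) (q : K) (v : List α →₀ K) :
    treeNorm T (q • v) = |q| * treeNorm T v := by
  rw [treeNorm, map_smul, weightedSum_smul, weightedSum_smul, ← mul_add, treeNorm]

lemma treeNorm_add_le (T : Set (List α)) (u v : List α →₀ K) :
    treeNorm T (u + v) ≤ treeNorm T u + treeNorm T v := by
  have hmass := weightedSum_add_le levelWeight_nonneg (mass u) (mass v)
  have hnode := weightedSum_add_le (nodeWeight_nonneg T) u v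
  rw [treeNorm, map_add, treeNorm, treeNorm]
  linarith

lemma treeNorm_sub_comm (T : Set (List α)) (u v : List α →₀ K) :
    treeNorm T (u - v) = treeNorm T (v - u) := by
  simpa using treeNorm_smul T (-1) (v - u)

lemma total_eq_linearCombination_levelWeight (v : List α →₀ K) :
    total v = linearCombination K levelWeight (mass v) + linearCombination K levelWeight v := by
  suffices h : total = linearCombination K levelWeight ∘ₗ mass (α := α) (K := K) +
      linearCombination K levelWeight from LinearMap.congr_fun h v
  ext t
  simp only [LinearMap.comp_apply, LinearMap.add_apply, lsingle_apply, linearCombination_single,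
    total_single, one_smul]
  induction t with
  | nil => norm_num [mass_single_nil, levelWeight]
  | cons a t ih =>
    rw [mass_single_cons, map_add, linearCombination_single, one_smul]
    linarith [two_mul_levelWeight_cons (K := K) a t]

lemma abs_total_le_treeNorm (T : Set (List α)) (v : List α →₀ K) : |total v| ≤ treeNorm T v := by
  rw [total_eq_linearCombination_levelWeight]
  refine (abs_add_le _ _).trans (add_le_add
    (abs_linearCombination_le (fun s => (abs_of_pos (levelWeight_pos s)).le) _)
    (abs_linearCombination_le (fun s => ?_) _))
  rw [abs_of_pos (levelWeight_pos s)]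
  linarith [two_mul_levelWeight_le_nodeWeight (K := K) T s, levelWeight_pos (K := K) s]

lemma weightedSum_nodeWeight_le (T : Set (List α)) (v : List α →₀ K) :
    weightedSum (nodeWeight T) v ≤ 2 * (treeNorm T v - total v) := by
  have habs : ∀ s : List α, |(levelWeight s : K)| ≤ levelWeight s := fun s =>
    (abs_of_pos (levelWeight_pos s)).le
  have hmass := le_of_abs_le (abs_linearCombination_le habs (mass v))
  have hcoeff := le_of_abs_le (abs_linearCombination_le habs v)
  have hnode := weightedSum_mono (two_mul_levelWeight_le_nodeWeight T) v
  rw [weightedSum_mul_left] at hnode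
  rw [treeNorm, total_eq_linearCombination_levelWeight]
  linarith

lemma weightedSum_mass_single_append_sub_le (r s : List α) :
    weightedSum levelWeight (mass (single (r ++ s) (1 : K) - single s 1)) ≤
      levelWeight s - levelWeight (r ++ s) := by
  induction r with
  | nil => simp
  | cons a r ih =>
    rw [List.cons_append]
    have hstep : mass (single (a :: (r ++ s)) (1 : K) - single s 1) =
        single (a :: (r ++ s)) 1 + mass (single (r ++ s) 1 - single s 1) := by
      rw [map_sub, map_sub, mass_single_cons, add_sub_assoc]
    have hadd := weightedSum_add_le levelWeight_nonneg (single (a :: (r ++ s)) (1 : K))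
      (mass (single (r ++ s) 1 - single s 1))
    rw [← hstep, weightedSum_single, abs_one, mul_one] at hadd
    linarith [two_mul_levelWeight_cons (K := K) a (r ++ s)]

variable {T : Set (List α)}

lemma weightedSum_nodeWeight_single {s : List α} (hs : s ∈ T) :
    weightedSum (nodeWeight T) (single s (1 : K)) = 2 * levelWeight s := by
  rw [weightedSum_single, abs_one, mul_one, nodeWeight, if_pos hs]

lemma treeNorm_single_sub_single_le {s t : List α} (hs : s ∈ T) (ht : t ∈ T) (hst : s <:+ t) :
    treeNorm T (single t (1 : K) - single s 1) ≤ 3 * (levelWeight t + levelWeight s) := by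
  obtain ⟨r, rfl⟩ := hst
  have hmass := weightedSum_mass_single_append_sub_le (K := K) r s
  have hnode := weightedSum_sub_le (nodeWeight_nonneg T) (single (r ++ s) (1 : K)) (single s 1)
  rw [weightedSum_nodeWeight_single hs, weightedSum_nodeWeight_single ht] at hnode
  rw [treeNorm]
  linarith [levelWeight_pos (K := K) (r ++ s)]

lemma treeNorm_single_le {t : List α} (ht : t ∈ T) :
    treeNorm T (single t (1 : K)) ≤ 1 + levelWeight t := by
  have hroot : weightedSum levelWeight (mass (single ([] : List α) (1 : K))) = 1 / 2 := by
    norm_num [mass_single_nil, levelWeight]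
  have hmass := weightedSum_mass_single_append_sub_le (K := K) t []
  have hadd := weightedSum_add_le levelWeight_nonneg
    (mass (single t (1 : K) - single [] 1)) (mass (single [] 1))
  have hnil : levelWeight ([] : List α) = (1 / 2 : K) := by simp [levelWeight]
  rw [← map_add, sub_add_cancel, hroot] at hadd
  rw [List.append_nil, hnil] at hmass
  rw [treeNorm, weightedSum_nodeWeight_single ht]
  linarith

lemma levelWeight_mul_weightedSum_childMass_le (T : Set (List α)) (s : List α) (v : List α →₀ K) :
    levelWeight s / 2 * weightedSum 1 (childMass s v) ≤ treeNorm T v := by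
  have hweight : (levelWeight ∘ fun a => a :: s) = fun a : α => (levelWeight s / 2 : K) * 1 := by
    ext a
    rw [← two_mul_levelWeight_cons a s]
    simp
  calc levelWeight s / 2 * weightedSum 1 (childMass s v)
      = weightedSum (levelWeight ∘ fun a => a :: s) (childMass s v) := by
        rw [hweight, weightedSum_mul_left]
        rfl
    _ ≤ weightedSum levelWeight (mass v) :=
        weightedSum_lcomapDomain_le levelWeight_nonneg (cons_left_injective s) (mass v)
    _ ≤ treeNorm T v := le_add_of_nonneg_right (weightedSum_nonneg (nodeWeight_nonneg T) v)

lemma abs_mass_le_of_notMem (hT : IsTree T) {s : List α} (hs : s ∉ T)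
    (v : List α →₀ K) : |mass v s| ≤ weightedSum (nodeWeight T) v := by
  rw [mass_apply]
  refine abs_linearCombination_le (fun t => ?_) v
  by_cases hst : s <:+ t
  · have ht : t ∉ T := fun ht => hs (hT hst ht)
    simp [hst, nodeWeight, ht]
  · simpa [hst] using nodeWeight_nonneg T t

end TreeNorm

section Branch

variable {α K : Type*}

lemma res_isSuffix_res (y : ℕ → α) {k m : ℕ} (h : k ≤ m) : res y k <:+ res y m := by
  induction m, h using Nat.le_induction with
  | base => exact List.suffix_rfl
  | succ m _ ih => exact ih.trans (List.suffix_cons _ _)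

lemma exists_forall_res_of_forall_exists_cons {P : List α → Prop} (hnil : P [])
    (hcons : ∀ s, P s → ∃ a, P (a :: s)) : ∃ y : ℕ → α, ∀ n, P (res y n) := by
  choose a ha using hcons
  let s : ℕ → {s // P s} := fun n => n.rec ⟨[], hnil⟩ fun _ s => ⟨a s.1 s.2 :: s.1, ha s.1 s.2⟩
  have hs : ∀ n, res (fun k => a (s k).1 (s k).2) n = (s n).1 := fun n => by
    induction n with
    | zero => rfl
    | succ n ih => rw [res_succ, ih]
  exact ⟨_, fun n => hs n ▸ (s n).2⟩

variable [Field K] [LinearOrder K] [IsStrictOrderedRing K] [TopologicalSpace K] [OrderTopology K]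
  {T : Set (List α)}

lemma tendsto_levelWeight_res [Archimedean K] (y : ℕ → α) :
    Tendsto (fun n => (levelWeight (res y n) : K)) atTop (𝓝 0) := by
  simp only [levelWeight, res_length]
  exact (tendsto_pow_atTop_nhds_zero_of_lt_one (by norm_num) (by norm_num)).comp
    (tendsto_add_atTop_nat 1)

lemma attainsNorm_treeNorm_of_branch [Archimedean K] {y : ℕ → α} (hy : ∀ n, res y n ∈ T) :
    AttainsNorm (treeNorm (K := K) T) total := by
  have hweight := tendsto_levelWeight_res (K := K) y
  refine ⟨fun n => single (res y n) 1, ?_, ?_, by simp⟩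
  · refine tendsto_of_tendsto_of_tendsto_of_le_of_le tendsto_const_nhds (by
      simpa using ((hweight.comp tendsto_fst).add (hweight.comp tendsto_snd)).const_mul 3)
      (fun _ => treeNorm_nonneg T _) fun ⟨m, k⟩ => ?_
    rcases le_total k m with h | h
    · exact treeNorm_single_sub_single_le (hy k) (hy m) (res_isSuffix_res y h)
    · dsimp only [Function.comp_apply]
      rw [treeNorm_sub_comm, add_comm]
      exact treeNorm_single_sub_single_le (hy m) (hy k) (res_isSuffix_res y h)
  · refine tendsto_of_tendsto_of_tendsto_of_le_of_le tendsto_const_nhds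
      (by simpa using hweight.const_add 1) (fun n => ?_) fun n => treeNorm_single_le (hy n)
    simpa using abs_total_le_treeNorm T (single (res y n) (1 : K))

lemma tendsto_mass_zero_of_children {v : ℕ → List α →₀ K} {s : List α}
    (hcauchy : Tendsto (fun mk : ℕ × ℕ => treeNorm T (v mk.1 - v mk.2)) (atTop ×ˢ atTop) (𝓝 0))
    (hcoeff : Tendsto (fun k => v k s) atTop (𝓝 0))
    (hchild : ∀ a, Tendsto (fun k => mass (v k) (a :: s)) atTop (𝓝 0)) :
    Tendsto (fun k => mass (v k) s) atTop (𝓝 0) := by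
  have hone : ∀ a, 0 ≤ (1 : α → K) a := fun _ => zero_le_one
  have hbound : Tendsto (fun mk : ℕ × ℕ => (levelWeight s / 2)⁻¹ * treeNorm T (v mk.1 - v mk.2))
      (atTop ×ˢ atTop) (𝓝 0) := by
    simpa only [mul_zero] using hcauchy.const_mul (levelWeight s / 2)⁻¹
  have hcauchy_child : Tendsto (fun mk : ℕ × ℕ =>
      weightedSum 1 (childMass s (v mk.1) - childMass s (v mk.2))) (atTop ×ˢ atTop) (𝓝 0) := by
    refine tendsto_of_tendsto_of_tendsto_of_le_of_le tendsto_const_nhds hbound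
      (fun _ => weightedSum_nonneg hone _) fun mk => ?_
    rw [← map_sub, le_inv_mul_iff₀ (half_pos (levelWeight_pos s))]
    exact levelWeight_mul_weightedSum_childMass_le T s _
  have hsum := tendsto_weightedSum_zero (u := fun k => childMass s (v k)) hone hcauchy_child
    fun a => by simpa only [childMass_apply] using hchild a
  have htotal : Tendsto (fun k => total (childMass s (v k))) atTop (𝓝 0) :=
    tendsto_zero_of_abs_le hsum fun k => abs_total_le_weightedSum_one _
  simpa only [mass_eq_add_total_childMass _ s, add_zero] using hcoeff.add htotal

lemma exists_branch_of_attainsNorm_treeNorm (hT : IsTree T)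
    (h : AttainsNorm (treeNorm (K := K) T) total) : ∃ y : ℕ → α, ∀ n, res y n ∈ T := by
  obtain ⟨v, hcauchy, hnorm, htotal⟩ := h
  have hnode : Tendsto (fun k => weightedSum (nodeWeight T) (v k)) atTop (𝓝 0) :=
    tendsto_of_tendsto_of_tendsto_of_le_of_le tendsto_const_nhds
      (by simpa using (hnorm.sub htotal).const_mul 2)
      (fun _ => weightedSum_nonneg (nodeWeight_nonneg T) _)
      fun k => weightedSum_nodeWeight_le T (v k)
  have hcoeff : ∀ s, Tendsto (fun k => v k s) atTop (𝓝 0) := fun s => by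
    refine tendsto_zero_of_abs_le (by simpa using hnode.const_mul (nodeWeight T s)⁻¹) fun k => ?_
    rw [le_inv_mul_iff₀ (nodeWeight_pos T s)]
    exact mul_abs_apply_le_weightedSum (nodeWeight_nonneg T) (v k) s
  obtain ⟨y, hy⟩ := exists_forall_res_of_forall_exists_cons
    (P := fun s => ¬ Tendsto (fun k => mass (v k) s) atTop (𝓝 0))
    (fun hnil => zero_ne_one (tendsto_nhds_unique hnil (by simpa only [mass_nil] using htotal)))
    fun s hs => by
      by_contra! hchild
      exact hs (tendsto_mass_zero_of_children hcauchy (hcoeff s) hchild)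
  refine ⟨y, fun n => by_contra fun hn => hy n ?_⟩
  exact tendsto_zero_of_abs_le hnode fun k => abs_mass_le_of_notMem hT hn (v k)

theorem attainsNorm_treeNorm_iff_exists_branch [Archimedean K]
    (hT : IsTree T) :
    AttainsNorm (treeNorm (K := K) T) total ↔ ∃ y : ℕ → α, ∀ n, res y n ∈ T :=
  ⟨exists_branch_of_attainsNorm_treeNorm hT, fun ⟨_, hy⟩ => attainsNorm_treeNorm_of_branch hy⟩

end Branch

section TreePoint

instance : DiscreteTopology ℚ := ⟨rfl⟩

/- Here limits in `ℚ` refer to the order topology, not to the discrete instance. -/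
lemma mem_Yset_iff_attainsNorm (x : Xspace) :
    x ∈ Yset ↔ letI := Preorder.topology ℚ; AttainsNorm x.val.1 x.val.2 := by
  let _ := Preorder.topology ℚ
  have : OrderTopology ℚ := ⟨rfl⟩
  simp only [AttainsNorm, LinearOrderedAddCommGroup.tendsto_nhds, prod_atTop_atTop_eq,
    eventually_atTop_prod_self, sub_zero, abs_of_nonneg (x.2.1.nonneg _)]
  simp only [eventually_atTop]
  rfl

/-- An enumeration of the words in `ℕ`, as an isomorphism of spaces of finitely supported
functions; it transports norms of trees to the space underlying `Xspace`. -/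
noncomputable def wordEquiv : (ℕ →₀ ℚ) ≃ₗ[ℚ] (List ℕ →₀ ℚ) :=
  Finsupp.domLCongr (Denumerable.eqv (List ℕ)).symm

/-- The point of `Xspace` that encodes a tree `T`. -/
noncomputable def treePoint (T : Set (List ℕ)) : Xspace where
  val := (treeNorm T ∘ wordEquiv, total ∘ wordEquiv)
  property :=
    ⟨{ nonneg := fun _ => treeNorm_nonneg T _
       eq_zero_iff := fun v => by simp [treeNorm_eq_zero_iff]
       smul_eq := fun q v => by simp [treeNorm_smul]
       add_le := fun v w => by simpa using treeNorm_add_le T _ _ },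
     (total ∘ₗ wordEquiv.toLinearMap).isLinear, fun _ => abs_total_le_treeNorm T _⟩

lemma treePoint_mem_Yset_iff {T : Set (List ℕ)} (hT : IsTree T) :
    treePoint T ∈ Yset ↔ ∃ y : ℕ → ℕ, ∀ n, res y n ∈ T := by
  let _ := Preorder.topology ℚ
  have : OrderTopology ℚ := ⟨rfl⟩
  exact (mem_Yset_iff_attainsNorm _).trans <|
    (attainsNorm_comp_addEquiv wordEquiv.toAddEquiv (treeNorm T) total).trans
      (attainsNorm_treeNorm_iff_exists_branch hT)

lemma continuous_treePoint {X : Type*} [TopologicalSpace X] {T : X → Set (List ℕ)}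
    (hT : ∀ s, IsLocallyConstant fun x => s ∈ T x) : Continuous fun x => treePoint (T x) := by
  classical
  have hnode : ∀ s, Continuous fun x => (nodeWeight (T x) s : ℚ) := fun s =>
    ((hT s).comp fun p : Prop => if p then 2 * levelWeight s else (1 : ℚ)).continuous
  refine Continuous.subtype_mk (Continuous.prodMk (continuous_pi fun v => ?_)
    continuous_const) _
  exact continuous_const.add (continuous_finsetSum _ fun s _ => (hnode s).mul continuous_const)

end TreePoint

section PreimageTree

variable {α β : Type*} {f : (ℕ → α) → ℕ → β} {x : ℕ → β}

/-- The tree of finite approximations to a solution `y` of `f y = x`. Words list the values of `y`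
in reverse order, as in `PiNat.res`. -/
def preimageTree (f : (ℕ → α) → ℕ → β) (x : ℕ → β) : Set (List α) :=
  {s | ∃ y, res y s.length = s ∧ res (f y) s.length = res x s.length}

lemma res_eq_res_of_le {y z : ℕ → α} {k n : ℕ} (hkn : k ≤ n) (h : res y n = res z n) :
    res y k = res z k :=
  res_eq_res.2 fun _ hm => res_eq_res.1 h (hm.trans_le hkn)

lemma isTree_preimageTree (f : (ℕ → α) → ℕ → β) (x : ℕ → β) : IsTree (preimageTree f x) := by
  rintro s t hst ⟨y, hy, hf⟩
  refine ⟨y, ?_, res_eq_res_of_le hst.length_le hf⟩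
  have hsuffix := res_isSuffix_res y hst.length_le
  rw [hy] at hsuffix
  exact (List.suffix_of_suffix_length_le hsuffix hst (by simp)).eq_of_length (by simp)

variable [TopologicalSpace β]

lemma isLocallyConstant_res [DiscreteTopology β] (n : ℕ) :
    IsLocallyConstant fun x : ℕ → β => res x n :=
  (IsLocallyConstant.iff_exists_open _).2 fun x =>
    ⟨cylinder x n, isOpen_cylinder _ x n, self_mem_cylinder x n, fun _ hy => by
      rwa [cylinder_eq_res] at hy⟩

lemma isLocallyConstant_mem_preimageTree [DiscreteTopology β] (f : (ℕ → α) → ℕ → β)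
    (s : List α) : IsLocallyConstant fun x => s ∈ preimageTree f x :=
  (isLocallyConstant_res s.length).comp fun r =>
    ∃ y, res y s.length = s ∧ res (f y) s.length = r

lemma tendsto_of_forall_res_eq {z : ℕ → ℕ → β} (h : ∀ n, res (z n) n = res x n) :
    Tendsto z atTop (𝓝 x) :=
  tendsto_pi_nhds.2 fun j => tendsto_const_nhds.congr' <| by
    filter_upwards [eventually_gt_atTop j] with n hn using (res_eq_res.1 (h n) hn).symm

lemma exists_branch_preimageTree_iff [TopologicalSpace α] [T2Space β] (hf : Continuous f) :
    (∃ y, ∀ n, res y n ∈ preimageTree f x) ↔ x ∈ Set.range f := by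
  constructor
  · rintro ⟨y, hy⟩
    choose z hzy hzx using hy
    simp only [res_length] at hzy hzx
    exact ⟨y, tendsto_nhds_unique ((hf.tendsto y).comp (tendsto_of_forall_res_eq hzy))
      (tendsto_of_forall_res_eq hzx)⟩
  · rintro ⟨y, rfl⟩
    exact ⟨y, fun n => ⟨y, by rw [res_length], rfl⟩⟩

end PreimageTree

lemma contReducibleToY_of_exists_branch_iff {C : Set (ℕ → ℕ)} {T : (ℕ → ℕ) → Set (List ℕ)}
    (hT : ∀ x, IsTree (T x))
    (hlocal : ∀ s, IsLocallyConstant fun x => s ∈ T x)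
    (hC : ∀ x, x ∈ C ↔ ∃ y, ∀ n, res y n ∈ T x) : ContReducibleToY C :=
  ⟨fun x => treePoint (T x), continuous_treePoint hlocal, fun x =>
    (hC x).trans (treePoint_mem_Yset_iff (hT x)).symm⟩

end NormAttaining

open NormAttaining in
theorem stmt10_general (C : Set (ℕ → ℕ)) (hC : MeasureTheory.AnalyticSet C) :
    ContReducibleToY C := by
  rw [MeasureTheory.AnalyticSet] at hC
  rcases hC with rfl | ⟨f, hf, rfl⟩
  · exact contReducibleToY_of_exists_branch_iff (T := fun _ => ∅) (by simp [IsTree])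
      (fun _ => .const _) (by simp)
  · exact contReducibleToY_of_exists_branch_iff (T := preimageTree f)
      (isTree_preimageTree f) (isLocallyConstant_mem_preimageTree f)
      fun _ => (exists_branch_preimageTree_iff hf).symm

/-- Every Borel subset of Baire space is continuously reducible to `Y`. -/
theorem stmt10 (C : Set (ℕ → ℕ)) (hC : @MeasurableSet (ℕ → ℕ) (borel (ℕ → ℕ)) C) :
    ContReducibleToY C := by
  borelize (ℕ → ℕ)
  exact stmt10_general C hC.analyticSet
end

section
/- The set Y is not a Borel subset of the space X, i.e. Y does not belong to the Borel σ-algebra of the topological space X. -/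
/-!
To a set `T` of finite words one attaches a norm on finitely supported vectors `v` on words: the
maximum of a weighted `ℓ¹` norm and of `|v []|` plus a seminorm, the *flow defect*, which vanishes
on flows (`v t = ∑ a, v (a :: t)` for every `t`) supported in `T`. The defect is invisible to the
evaluation at `[]` and has to tend to `0` along a sequence on which that evaluation attains its
norm; the limit is then a flow in `T` with value `1` at `[]`, and following non-zero values from the
root produces an infinite branch of `T`. Conversely the partial sums of the basis vectors along a
branch form such a sequence. As the norm at a given vector depends on `T` only at finitely many
words, a locally constant family of trees yields a continuous reduction to `Y` of the set of
parameters whose tree has a branch.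

Every analytic set of sequences is the set of `x` such that the section at `x` of some tree of
pairs has a branch. Reading `x` itself as the code of a tree of pairs, Cantor's diagonal argument
provides a set which is reducible to `Y` and whose complement is not analytic; it is not Borel.
-/

open Filter Topology MeasureTheory

section Seminorm

variable {𝕜 E E' : Type*} [Field 𝕜] [LinearOrder 𝕜] [AddCommGroup E] [AddCommGroup E']

/-- `v` is a Cauchy sequence for `p`; this extends `IsCauchyWrt` to
other spaces than `ℕ →₀ ℚ`. -/
def IsCauchyFor (p : E → 𝕜) (v : ℕ → E) : Prop :=
  ∀ ε : 𝕜, 0 < ε → ∃ K, ∀ m k, K ≤ m → K ≤ k → p (v m - v k) < ε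

/-- `F` attains the norm `1` on the unit sphere of the completion for `p`; this is the condition
defining `Yset`, for other spaces than `ℕ →₀ ℚ`. Limits are expressed with `ε` because the topology
in force on `ℚ` is the discrete one. -/
def AttainsNorm (p F : E → 𝕜) : Prop :=
  ∃ v : ℕ → E, IsCauchyFor p v ∧
    (∀ ε : 𝕜, 0 < ε → ∃ K, ∀ k, K ≤ k → |p (v k) - 1| < ε) ∧
    (∀ ε : 𝕜, 0 < ε → ∃ K, ∀ k, K ≤ k → |F (v k) - 1| < ε)

theorem IsCauchyFor.mono {p q : E → 𝕜} {v : ℕ → E} (hv : IsCauchyFor p v) (hqp : q ≤ p) :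
    IsCauchyFor q v := fun ε hε =>
  (hv ε hε).imp fun _ hK m k hm hk => (hqp _).trans_lt (hK m k hm hk)

theorem attainsNorm_iff_exists_tendsto [IsStrictOrderedRing 𝕜] [TopologicalSpace 𝕜]
    [OrderTopology 𝕜] {p F : E → 𝕜} :
    AttainsNorm p F ↔ ∃ v : ℕ → E, IsCauchyFor p v ∧
      Tendsto (fun k => p (v k)) atTop (𝓝 1) ∧ Tendsto (fun k => F (v k)) atTop (𝓝 1) := by
  simp only [AttainsNorm, LinearOrderedAddCommGroup.tendsto_nhds, eventually_atTop, gt_iff_lt]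

theorem attainsNorm_comp_addEquiv_iff (e : E ≃+ E') (p F : E' → 𝕜) :
    AttainsNorm (p ∘ e) (F ∘ e) ↔ AttainsNorm p F := by
  refine (Equiv.arrowCongr (Equiv.refl ℕ) e.toEquiv).exists_congr fun v => ?_
  simp [IsCauchyFor]

variable [Module 𝕜 E] [Module 𝕜 E']

/-- A seminorm with values in the ordered field of scalars. Mathlib's `Seminorm` is real-valued,
whereas the norms constructed here have to take rational values. -/
structure IsScalarSeminorm (p : E → 𝕜) : Prop where
  map_smul : ∀ (a : 𝕜) (v : E), p (a • v) = |a| * p v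
  map_add_le : ∀ v w : E, p (v + w) ≤ p v + p w

namespace IsScalarSeminorm

theorem comp {p : E' → 𝕜} (hp : IsScalarSeminorm p) (f : E →ₗ[𝕜] E') :
    IsScalarSeminorm (p ∘ f) where
  map_smul a v := by simp only [Function.comp_apply, _root_.map_smul, hp.map_smul]
  map_add_le v w := by simpa only [Function.comp_apply, map_add] using hp.map_add_le (f v) (f w)

variable [IsStrictOrderedRing 𝕜] {p q : E → 𝕜}

theorem map_zero (hp : IsScalarSeminorm p) : p 0 = 0 := by
  simpa using hp.map_smul 0 0

theorem map_neg (hp : IsScalarSeminorm p) (v : E) : p (-v) = p v := by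
  simpa using hp.map_smul (-1) v

theorem map_sub_rev (hp : IsScalarSeminorm p) (v w : E) : p (v - w) = p (w - v) := by
  rw [← neg_sub, hp.map_neg]

theorem nonneg (hp : IsScalarSeminorm p) (v : E) : 0 ≤ p v := by
  have h : p (v + -v) ≤ p v + p (-v) := hp.map_add_le v (-v)
  rw [add_neg_cancel, hp.map_zero, hp.map_neg] at h
  linarith

theorem map_sub_le (hp : IsScalarSeminorm p) (v w : E) : p (v - w) ≤ p v + p w := by
  simpa only [sub_eq_add_neg, hp.map_neg] using hp.map_add_le v (-w)

theorem map_sum_le (hp : IsScalarSeminorm p) {ι : Type*} (s : Finset ι) (v : ι → E) :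
    p (∑ i ∈ s, v i) ≤ ∑ i ∈ s, p (v i) :=
  Finset.le_sum_of_subadditive p hp.map_zero.le hp.map_add_le s v

theorem add (hp : IsScalarSeminorm p) (hq : IsScalarSeminorm q) : IsScalarSeminorm (p + q) where
  map_smul a v := by simp only [Pi.add_apply, hp.map_smul, hq.map_smul, mul_add]
  map_add_le v w := (add_le_add (hp.map_add_le v w) (hq.map_add_le v w)).trans_eq
    (add_add_add_comm _ _ _ _)

theorem sup (hp : IsScalarSeminorm p) (hq : IsScalarSeminorm q) : IsScalarSeminorm (p ⊔ q) where
  map_smul a v := by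
    simp only [Pi.sup_apply, hp.map_smul, hq.map_smul, mul_max_of_nonneg _ _ (abs_nonneg a)]
  map_add_le v w := max_le
    ((hp.map_add_le v w).trans (add_le_add (le_max_left _ _) (le_max_left _ _)))
    ((hq.map_add_le v w).trans (add_le_add (le_max_right _ _) (le_max_right _ _)))

theorem abs_linearMap (f : E →ₗ[𝕜] 𝕜) : IsScalarSeminorm fun v => |f v| where
  map_smul a v := by rw [_root_.map_smul, smul_eq_mul, abs_mul]
  map_add_le v w := by simpa only [map_add] using abs_add_le (f v) (f w)

theorem sub_le_of_le_geometric_two (hp : IsScalarSeminorm p) {C : 𝕜} (hC : 0 ≤ C) {v : ℕ → E}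
    (hv : ∀ k, p (v (k + 1) - v k) ≤ C * (1 / 2) ^ (k + 1)) {k m : ℕ} (hkm : k ≤ m) :
    p (v m - v k) ≤ C * (1 / 2) ^ k := by
  suffices h : p (v m - v k) ≤ C * ((1 / 2) ^ k - (1 / 2) ^ m) from
    h.trans (mul_le_mul_of_nonneg_left (sub_le_self _ (by positivity)) hC)
  induction m, hkm using Nat.le_induction with
  | base => simp [hp.map_zero]
  | succ m _ ih =>
    calc p (v (m + 1) - v k) = p ((v (m + 1) - v m) + (v m - v k)) := by rw [sub_add_sub_cancel]
      _ ≤ C * (1 / 2) ^ (m + 1) + C * ((1 / 2) ^ k - (1 / 2) ^ m) :=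
        (hp.map_add_le _ _).trans (add_le_add (hv m) ih)
      _ = C * ((1 / 2) ^ k - (1 / 2) ^ (m + 1)) := by ring

theorem isCauchyFor_of_le_geometric_two [Archimedean 𝕜] (hp : IsScalarSeminorm p) {C : 𝕜}
    (hC : 0 ≤ C) {v : ℕ → E} (hv : ∀ k, p (v (k + 1) - v k) ≤ C * (1 / 2) ^ (k + 1)) :
    IsCauchyFor p v := by
  intro ε hε
  obtain ⟨K, hK⟩ : ∃ K : ℕ, (1 / 2 : 𝕜) ^ K < ε / (C + 1) :=
    exists_pow_lt_of_lt_one (by positivity) (by norm_num)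
  have hsmall : ∀ k, K ≤ k → C * (1 / 2) ^ k < ε := fun k hk =>
    calc C * (1 / 2) ^ k ≤ (C + 1) * (1 / 2) ^ K := by
          gcongr ?_ * ?_
          · linarith
          · exact pow_le_pow_of_le_one (by norm_num) (by norm_num) hk
      _ < ε := (lt_div_iff₀' (by positivity)).1 hK
  refine ⟨K, fun m k hm hk => ?_⟩
  rcases le_total k m with hkm | hmk
  · exact (hp.sub_le_of_le_geometric_two hC hv hkm).trans_lt (hsmall k hk)
  · rw [hp.map_sub_rev]
    exact (hp.sub_le_of_le_geometric_two hC hv hmk).trans_lt (hsmall m hm)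

end IsScalarSeminorm

end Seminorm

section WeightedSum

variable {ι 𝕜 : Type*} [Field 𝕜] [LinearOrder 𝕜] [IsStrictOrderedRing 𝕜] {ω ω' : ι → 𝕜}

/-- The `ℓ¹` seminorm with weights `ω` on finitely supported functions. -/
def weightedSum (ω : ι → 𝕜) (v : ι →₀ 𝕜) : 𝕜 := v.sum fun t x => ω t * |x|

theorem weightedSum_eq_sum_of_support_subset (ω : ι → 𝕜) {v : ι →₀ 𝕜} {U : Finset ι}
    (h : v.support ⊆ U) : weightedSum ω v = ∑ t ∈ U, ω t * |v t| :=
  Finsupp.sum_of_support_subset _ h _ (by simp)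

@[simp]
theorem weightedSum_single (ω : ι → 𝕜) (t : ι) (x : 𝕜) :
    weightedSum ω (Finsupp.single t x) = ω t * |x| := by
  simp [weightedSum]

theorem isScalarSeminorm_weightedSum (hω : 0 ≤ ω) : IsScalarSeminorm (weightedSum ω) where
  map_smul a v := by
    rw [weightedSum, Finsupp.sum_smul_index fun t => by simp, weightedSum, Finsupp.mul_sum]
    simp only [abs_mul, mul_left_comm]
  map_add_le v w := by
    classical
    rw [weightedSum_eq_sum_of_support_subset ω Finsupp.support_add,
      weightedSum_eq_sum_of_support_subset ω Finset.subset_union_left,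
      weightedSum_eq_sum_of_support_subset ω Finset.subset_union_right, ← Finset.sum_add_distrib]
    refine Finset.sum_le_sum fun t _ => ?_
    rw [← mul_add]
    exact mul_le_mul_of_nonneg_left (abs_add_le _ _) (hω t)

theorem weightedSum_mono (h : ω ≤ ω') : weightedSum ω ≤ weightedSum ω' := fun _ =>
  Finset.sum_le_sum fun t _ => mul_le_mul_of_nonneg_right (h t) (abs_nonneg _)

theorem mul_abs_apply_le_weightedSum (hω : 0 ≤ ω) (v : ι →₀ 𝕜) (t : ι) :
    ω t * |v t| ≤ weightedSum ω v := by
  classical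
  rw [weightedSum_eq_sum_of_support_subset ω (Finset.subset_insert t v.support)]
  exact Finset.single_le_sum (f := fun t => ω t * |v t|)
    (fun s _ => mul_nonneg (hω s) (abs_nonneg _)) (Finset.mem_insert_self t _)

theorem weightedSum_le_sum_support_add (hω : 0 ≤ ω) (v w : ι →₀ 𝕜) :
    weightedSum ω v ≤ ∑ t ∈ w.support, ω t * |v t| + weightedSum ω (v - w) := by
  classical
  let U := v.support ∪ w.support
  calc weightedSum ω v = ∑ t ∈ w.support, ω t * |v t| + ∑ t ∈ U \ w.support, ω t * |v t| := by
        rw [weightedSum_eq_sum_of_support_subset ω Finset.subset_union_left, add_comm,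
          Finset.sum_sdiff Finset.subset_union_right]
    _ = ∑ t ∈ w.support, ω t * |v t| + ∑ t ∈ U \ w.support, ω t * |(v - w) t| := by
        congr 1
        refine Finset.sum_congr rfl fun t ht => ?_
        rw [Finsupp.sub_apply, Finsupp.notMem_support_iff.1 (Finset.mem_sdiff.1 ht).2, sub_zero]
    _ ≤ ∑ t ∈ w.support, ω t * |v t| + weightedSum ω (v - w) := by
        rw [weightedSum_eq_sum_of_support_subset ω (U := U) Finsupp.support_sub]
        gcongr
        · exact fun t _ _ => mul_nonneg (hω t) (abs_nonneg _)
        · exact Finset.sdiff_subset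

variable [TopologicalSpace 𝕜] [OrderTopology 𝕜]

theorem tendsto_weightedSum_zero (hω : 0 ≤ ω) {v : ℕ → ι →₀ 𝕜}
    (hv : IsCauchyFor (weightedSum ω) v)
    (h : ∀ t, ω t ≠ 0 → Tendsto (fun k => v k t) atTop (𝓝 0)) :
    Tendsto (fun k => weightedSum ω (v k)) atTop (𝓝 0) := by
  have hterm : ∀ t, Tendsto (fun k => ω t * |v k t|) atTop (𝓝 0) := by
    intro t
    rcases eq_or_ne (ω t) 0 with ht | ht
    · simp [ht]
    · simpa using (h t ht).abs.const_mul (ω t)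
  refine LinearOrderedAddCommGroup.tendsto_nhds.2 fun ε hε => ?_
  obtain ⟨K, hK⟩ := hv (ε / 2) (half_pos hε)
  have hsum : Tendsto (fun k => ∑ t ∈ (v K).support, ω t * |v k t|) atTop (𝓝 0) := by
    simpa using tendsto_finsetSum (v K).support fun t _ => hterm t
  filter_upwards [hsum.eventually_lt_const (half_pos hε), eventually_ge_atTop K] with k hk hKk
  rw [sub_zero, abs_of_nonneg ((isScalarSeminorm_weightedSum hω).nonneg _)]
  linarith [weightedSum_le_sum_support_add hω (v k) (v K), hK k K hKk le_rfl]

theorem tendsto_zero_of_mul_abs_le {a b : ℕ → 𝕜} {c : 𝕜} (hc : 0 < c)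
    (hab : ∀ k, c * |a k| ≤ b k) (hb : Tendsto b atTop (𝓝 0)) : Tendsto a atTop (𝓝 0) := by
  refine (tendsto_zero_iff_abs_tendsto_zero a).2 ?_
  refine tendsto_of_tendsto_of_tendsto_of_le_of_le tendsto_const_nhds
    (by simpa using hb.div_const c) (fun k => abs_nonneg (a k)) fun k => ?_
  exact (le_div_iff₀' hc).2 (hab k)

end WeightedSum

section Branch

variable {α β : Type*}

/-- `T` has an infinite branch. As in `PiNat.res`, words are read backwards, so that the children
of the node `t` are the words `a :: t`. The set `T` need not be closed under taking parents. -/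
def HasBranch (T : Set (List α)) : Prop := ∃ y : ℕ → α, ∀ n, PiNat.res y n ∈ T

theorem hasBranch_of_forall_exists_cons_mem {T : Set (List α)} (hnil : [] ∈ T)
    (hcons : ∀ t ∈ T, ∃ a, a :: t ∈ T) : HasBranch T := by
  choose label hlabel using hcons
  let node : ℕ → T := fun n => n.rec ⟨[], hnil⟩ fun _ t => ⟨label t t.2 :: t, hlabel t t.2⟩
  have hres : ∀ n, PiNat.res (fun n => label (node n).1 (node n).2) n = (node n).1 := by
    intro n
    induction n with
    | zero => rfl
    | succ n ih => rw [PiNat.res_succ, ih]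
  exact ⟨_, fun n => by rw [hres]; exact (node n).2⟩

theorem HasBranch.mono {S T : Set (List α)} (h : HasBranch S) (hST : S ⊆ T) : HasBranch T :=
  h.imp fun _ hy n => hST (hy n)

/-- The section at `x` of a tree `T` of pairs of words of equal length. -/
def treeSection (T : Set (List α × List β)) (x : ℕ → α) : Set (List β) :=
  {t | (PiNat.res x t.length, t) ∈ T}

theorem hasBranch_treeSection_iff {T : Set (List α × List β)} {x : ℕ → α} :
    HasBranch (treeSection T x) ↔ ∃ y : ℕ → β, ∀ n, (PiNat.res x n, PiNat.res y n) ∈ T := by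
  simp [HasBranch, treeSection]

theorem tendsto_of_forall_res_eq [TopologicalSpace α] {x : ℕ → ℕ → α} {y : ℕ → α}
    (h : ∀ n, PiNat.res (x n) n = PiNat.res y n) : Tendsto x atTop (𝓝 y) := by
  refine tendsto_pi_nhds.2 fun i => tendsto_const_nhds.congr' ?_
  filter_upwards [eventually_gt_atTop i] with n hn
  exact (PiNat.res_eq_res.1 (h n) hn).symm

theorem isLocallyConstant_res [TopologicalSpace α] [DiscreteTopology α] (n : ℕ) :
    IsLocallyConstant fun x : ℕ → α => PiNat.res x n := by
  refine (IsLocallyConstant.iff_eventually_eq _).2 fun x => ?_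
  have h := (PiNat.isOpen_cylinder (fun _ => α) x n).mem_nhds (PiNat.self_mem_cylinder x n)
  rwa [PiNat.cylinder_eq_res] at h

theorem exists_eq_hasBranch_treeSection_of_analyticSet [TopologicalSpace α] [T2Space α]
    {A : Set (ℕ → α)} (hA : AnalyticSet A) :
    ∃ T : Set (List α × List ℕ), A = {x | HasBranch (treeSection T x)} := by
  rw [AnalyticSet] at hA
  obtain rfl | ⟨f, hf, rfl⟩ := hA
  · exact ⟨∅, by simp [hasBranch_treeSection_iff]⟩
  refine ⟨{p | ∃ y n, (PiNat.res (f y) n, PiNat.res y n) = p}, Set.ext fun x => ?_⟩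
  simp only [Set.mem_ofPred_eq, hasBranch_treeSection_iff]
  constructor
  · rintro ⟨y, rfl⟩
    exact ⟨y, fun n => ⟨y, n, rfl⟩⟩
  · rintro ⟨z, hz⟩
    have hz' : ∀ n, ∃ y, PiNat.res (f y) n = PiNat.res x n ∧ PiNat.res y n = PiNat.res z n := by
      intro n
      obtain ⟨y, m, h⟩ := hz n
      obtain ⟨h₁, h₂⟩ := Prod.ext_iff.1 h
      obtain rfl : m = n := by simpa using congrArg List.length h₂
      exact ⟨y, h₁, h₂⟩
    choose y hx hyz using hz'
    exact ⟨z, tendsto_nhds_unique ((hf.tendsto z).comp (tendsto_of_forall_res_eq hyz))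
      (tendsto_of_forall_res_eq hx)⟩

/-- The diagonal of the universal tree: `c` codes the tree of pairs `p` with
`c (encode p) = 0`, of which the section at `c` itself is taken. -/
def diagonalTree (c : ℕ → ℕ) : Set (List ℕ) :=
  treeSection {p : List ℕ × List ℕ | c (Encodable.encode p) = 0} c

theorem isLocallyConstant_mem_diagonalTree (t : List ℕ) :
    IsLocallyConstant fun c => t ∈ diagonalTree c := by
  refine (IsLocallyConstant.iff_eventually_eq _).2 fun c => ?_
  have hres := (isLocallyConstant_res t.length).eventually_eq c
  have hval := (isLocallyConstant_res
    (Encodable.encode (PiNat.res c t.length, t) + 1)).eventually_eq c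
  filter_upwards [hres, hval] with d hd hd'
  simp only [diagonalTree, treeSection, Set.mem_ofPred_eq, hd,
    PiNat.res_eq_res.1 hd' (Nat.lt_succ_self _)]

theorem not_analyticSet_compl_hasBranch_diagonalTree :
    ¬ AnalyticSet {c | HasBranch (diagonalTree c)}ᶜ := by
  classical
  intro h
  obtain ⟨T, hT⟩ := exists_eq_hasBranch_treeSection_of_analyticSet h
  obtain ⟨c, hc⟩ : ∃ c : ℕ → ℕ, {p : List ℕ × List ℕ | c (Encodable.encode p) = 0} = T :=
    ⟨fun m => if m ∈ Encodable.encode '' T then 0 else 1, by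
      ext p; simp [Encodable.encode_injective.mem_set_image]⟩
  have hdiag : c ∈ {c | HasBranch (diagonalTree c)}ᶜ ↔ HasBranch (diagonalTree c) := by
    rw [hT, diagonalTree, hc, Set.mem_ofPred_eq]
  exact iff_not_self hdiag.symm

end Branch

section TreeNorm

variable {α 𝕜 : Type*} [Field 𝕜]

/-- The weight of a node in the `ℓ¹` norm on vectors indexed by words, normalized so that the
weights along an infinite branch add up to `1`. -/
def nodeWeight (t : List α) : 𝕜 := (1 / 2) ^ (t.length + 1)

theorem nodeWeight_res (y : ℕ → α) (n : ℕ) :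
    nodeWeight (PiNat.res y n) = (1 / 2 : 𝕜) ^ (n + 1) := by
  rw [nodeWeight, PiNat.res_length]

/-- The operator `v ↦ (t ↦ ∑ a, v (a :: t))`, defined by moving each basis vector to the parent. -/
noncomputable def childSum : (List α →₀ 𝕜) →ₗ[𝕜] List α →₀ 𝕜 :=
  Finsupp.linearCombination 𝕜 fun
    | [] => 0
    | _ :: t => Finsupp.single t 1

@[simp]
theorem childSum_single_nil (x : 𝕜) : childSum (Finsupp.single ([] : List α) x) = 0 := by
  simp [childSum]

@[simp]
theorem childSum_single_cons (a : α) (t : List α) (x : 𝕜) :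
    childSum (Finsupp.single (a :: t) x) = Finsupp.single t x := by
  simp [childSum]

/-- The sum of the basis vectors at the nodes of length at most `k` of the branch `y`. -/
noncomputable def branchVec (y : ℕ → α) (k : ℕ) : List α →₀ 𝕜 :=
  ∑ i ∈ Finset.range (k + 1), Finsupp.single (PiNat.res y i) 1

theorem branchVec_succ (y : ℕ → α) (k : ℕ) :
    (branchVec y (k + 1) : List α →₀ 𝕜) =
      branchVec y k + Finsupp.single (PiNat.res y (k + 1)) 1 :=
  Finset.sum_range_succ _ _

theorem branchVec_sub_childSum (y : ℕ → α) (k : ℕ) :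
    branchVec y k - childSum (branchVec y k) = Finsupp.single (PiNat.res y k) (1 : 𝕜) := by
  induction k with
  | zero => simp [branchVec]
  | succ k ih =>
    rw [branchVec_succ, map_add, add_sub_add_comm, ih, PiNat.res_succ, childSum_single_cons]
    abel

theorem branchVec_apply_nil (y : ℕ → α) (k : ℕ) : (branchVec y k : List α →₀ 𝕜) [] = 1 := by
  simp [branchVec, Finset.sum_range_succ']

variable [LinearOrder 𝕜]

/-- The seminorm measuring how far `v` is from a flow (`v t = ∑ a, v (a :: t)` for every `t`)
supported in `T`. -/
noncomputable def flowDefect (T : Set (List α)) : (List α →₀ 𝕜) → 𝕜 :=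
  weightedSum nodeWeight ∘ (LinearMap.id - childSum : _ →ₗ[𝕜] _) +
    weightedSum (Tᶜ.indicator nodeWeight)

/-- The norm attached to a set of nodes `T`, for which the evaluation at the root attains its norm
exactly when `T` has a branch. -/
noncomputable def treeNorm (T : Set (List α)) : (List α →₀ 𝕜) → 𝕜 :=
  weightedSum nodeWeight ⊔ ((fun v => |v []|) + flowDefect T)

variable {T : Set (List α)}

theorem flowDefect_apply (T : Set (List α)) (v : List α →₀ 𝕜) :
    flowDefect T v =
      weightedSum nodeWeight (v - childSum v) + weightedSum (Tᶜ.indicator nodeWeight) v :=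
  rfl

theorem treeNorm_apply (T : Set (List α)) (v : List α →₀ 𝕜) :
    treeNorm T v = max (weightedSum nodeWeight v) (|v []| + flowDefect T v) :=
  rfl

theorem weightedSum_nodeWeight_le_treeNorm (T : Set (List α)) :
    weightedSum nodeWeight ≤ (treeNorm T : (List α →₀ 𝕜) → 𝕜) :=
  le_sup_left

theorem abs_apply_nil_add_flowDefect_le_treeNorm (T : Set (List α)) (v : List α →₀ 𝕜) :
    |v []| + flowDefect T v ≤ treeNorm T v :=
  le_max_right _ _

theorem treeNorm_congr {T' : Set (List α)} {v : List α →₀ 𝕜}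
    (h : ∀ t ∈ v.support, t ∈ T ↔ t ∈ T') : treeNorm T v = treeNorm T' v := by
  classical
  have hout : weightedSum (Tᶜ.indicator nodeWeight) v = weightedSum (T'ᶜ.indicator nodeWeight) v :=
    Finset.sum_congr rfl fun t ht => by simp only [Set.indicator_apply, Set.mem_compl_iff, h t ht]
  rw [treeNorm_apply, treeNorm_apply, flowDefect_apply, flowDefect_apply, hout]

theorem isLocallyConstant_treeNorm {P : Type*} [TopologicalSpace P] {T : P → Set (List α)}
    (hT : ∀ t, IsLocallyConstant fun c => t ∈ T c) (v : List α →₀ 𝕜) :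
    IsLocallyConstant fun c => treeNorm (T c) v := by
  refine (IsLocallyConstant.iff_eventually_eq _).2 fun c => ?_
  filter_upwards [(eventually_all_finset v.support).2 fun t _ => (hT t).eventually_eq c] with d hd
  exact treeNorm_congr fun t ht => iff_of_eq (hd t ht)

variable [IsStrictOrderedRing 𝕜]

theorem nodeWeight_pos (t : List α) : 0 < (nodeWeight t : 𝕜) := by
  unfold nodeWeight; positivity

theorem nodeWeight_nonneg : 0 ≤ (nodeWeight : List α → 𝕜) := fun t => (nodeWeight_pos t).le

theorem indicator_nodeWeight_nonneg (S : Set (List α)) :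
    0 ≤ S.indicator (nodeWeight : List α → 𝕜) :=
  Set.indicator_nonneg fun t _ => nodeWeight_nonneg t

theorem two_mul_nodeWeight_cons (a : α) (t : List α) :
    2 * nodeWeight (a :: t) = (nodeWeight t : 𝕜) := by
  simp only [nodeWeight, List.length_cons, pow_succ]; ring

theorem nodeWeight_mul_abs_childSum_apply_le (v : List α →₀ 𝕜) (t : List α) :
    nodeWeight t * |childSum v t| ≤
      2 * weightedSum ((Set.range (· :: t)).indicator nodeWeight) v := by
  have hterm : ∀ s x, nodeWeight t * |childSum (Finsupp.single s x) t| =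
      2 * ((Set.range (· :: t)).indicator nodeWeight s * |(x : 𝕜)|) := by
    rintro (_ | ⟨a, s⟩) x
    · simp
    · rcases eq_or_ne s t with rfl | hst
      · simp [← two_mul_nodeWeight_cons a s, mul_assoc]
      · simp [hst.symm]
  calc nodeWeight t * |childSum v t|
      = nodeWeight t * |∑ s ∈ v.support, childSum (Finsupp.single s (v s)) t| := by
        conv_lhs => rw [← v.sum_single, Finsupp.sum, map_sum, Finsupp.finsetSum_apply]
    _ ≤ ∑ s ∈ v.support, nodeWeight t * |childSum (Finsupp.single s (v s)) t| := by
        rw [← Finset.mul_sum]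
        exact mul_le_mul_of_nonneg_left (Finset.abs_sum_le_sum_abs _ _) (nodeWeight_nonneg t)
    _ = 2 * weightedSum ((Set.range (· :: t)).indicator nodeWeight) v := by
        simp only [hterm, weightedSum, Finsupp.sum, Finset.mul_sum]

theorem isScalarSeminorm_flowDefect (T : Set (List α)) :
    IsScalarSeminorm (flowDefect T : (List α →₀ 𝕜) → 𝕜) :=
  ((isScalarSeminorm_weightedSum nodeWeight_nonneg).comp _).add
    (isScalarSeminorm_weightedSum (indicator_nodeWeight_nonneg _))

theorem isScalarSeminorm_treeNorm (T : Set (List α)) :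
    IsScalarSeminorm (treeNorm T : (List α →₀ 𝕜) → 𝕜) :=
  (isScalarSeminorm_weightedSum nodeWeight_nonneg).sup
    ((IsScalarSeminorm.abs_linearMap (Finsupp.lapply [])).add (isScalarSeminorm_flowDefect T))

theorem abs_apply_nil_le_treeNorm (T : Set (List α)) (v : List α →₀ 𝕜) :
    |v []| ≤ treeNorm T v :=
  (le_add_of_nonneg_right ((isScalarSeminorm_flowDefect T).nonneg v)).trans
    (abs_apply_nil_add_flowDefect_le_treeNorm T v)

theorem treeNorm_eq_zero_iff {v : List α →₀ 𝕜} : treeNorm T v = 0 ↔ v = 0 := by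
  refine ⟨fun h => Finsupp.ext fun t => ?_, fun h => h ▸ (isScalarSeminorm_treeNorm T).map_zero⟩
  have ht : nodeWeight t * |v t| ≤ 0 :=
    (mul_abs_apply_le_weightedSum nodeWeight_nonneg v t).trans
      ((weightedSum_nodeWeight_le_treeNorm T v).trans_eq h)
  exact abs_nonpos_iff.1 (nonpos_of_mul_nonpos_right ht (nodeWeight_pos t))

theorem nodeWeight_mul_abs_apply_le_flowDefect {t : List α} (ht : t ∉ T) (v : List α →₀ 𝕜) :
    nodeWeight t * |v t| ≤ flowDefect T v :=
  calc nodeWeight t * |v t| = Tᶜ.indicator nodeWeight t * |v t| := by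
        rw [Set.indicator_of_mem (Set.mem_compl ht)]
    _ ≤ weightedSum (Tᶜ.indicator nodeWeight) v :=
        mul_abs_apply_le_weightedSum (indicator_nodeWeight_nonneg _) v t
    _ ≤ flowDefect T v :=
        le_add_of_nonneg_left ((isScalarSeminorm_weightedSum nodeWeight_nonneg).nonneg _)

theorem nodeWeight_mul_abs_apply_le_flowDefect_add (T : Set (List α)) (v : List α →₀ 𝕜)
    (t : List α) :
    nodeWeight t * |v t| ≤
      flowDefect T v + 2 * weightedSum ((Set.range (· :: t)).indicator nodeWeight) v :=
  calc nodeWeight t * |v t| = nodeWeight t * |(v - childSum v) t + childSum v t| := by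
        rw [Finsupp.sub_apply, sub_add_cancel]
    _ ≤ nodeWeight t * |(v - childSum v) t| + nodeWeight t * |childSum v t| := by
        rw [← mul_add]
        exact mul_le_mul_of_nonneg_left (abs_add_le _ _) (nodeWeight_nonneg t)
    _ ≤ flowDefect T v + 2 * weightedSum ((Set.range (· :: t)).indicator nodeWeight) v :=
        add_le_add
          ((mul_abs_apply_le_weightedSum nodeWeight_nonneg _ t).trans (le_add_of_nonneg_right
            ((isScalarSeminorm_weightedSum (indicator_nodeWeight_nonneg _)).nonneg v)))
          (nodeWeight_mul_abs_childSum_apply_le v t)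

theorem weightedSum_nodeWeight_branchVec_le_one (y : ℕ → α) (k : ℕ) :
    weightedSum nodeWeight (branchVec y k : List α →₀ 𝕜) ≤ 1 := by
  have h := (isScalarSeminorm_weightedSum nodeWeight_nonneg).sub_le_of_le_geometric_two
    (v := fun n => ∑ i ∈ Finset.range n, Finsupp.single (PiNat.res y i) (1 : 𝕜)) zero_le_one
    (fun n => by simp [Finset.sum_range_succ, nodeWeight_res]) (Nat.zero_le (k + 1))
  simpa [branchVec] using h

theorem flowDefect_branchVec {y : ℕ → α} (hy : ∀ n, PiNat.res y n ∈ T) (k : ℕ) :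
    flowDefect T (branchVec y k) = (1 / 2 : 𝕜) ^ (k + 1) := by
  have hout := isScalarSeminorm_weightedSum
    (indicator_nodeWeight_nonneg (𝕜 := 𝕜) Tᶜ)
  have hzero : weightedSum (Tᶜ.indicator nodeWeight) (branchVec y k : List α →₀ 𝕜) = 0 :=
    ((hout.map_sum_le _ _).trans_eq (Finset.sum_eq_zero fun i _ => by simp [hy i])).antisymm
      (hout.nonneg _)
  rw [flowDefect_apply, hzero, branchVec_sub_childSum, weightedSum_single, nodeWeight_res,
    abs_one, mul_one, add_zero]

theorem treeNorm_branchVec_le {y : ℕ → α} (hy : ∀ n, PiNat.res y n ∈ T) (k : ℕ) :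
    treeNorm T (branchVec y k) ≤ 1 + (1 / 2 : 𝕜) ^ (k + 1) := by
  refine max_le ?_ ?_
  · exact (weightedSum_nodeWeight_branchVec_le_one y k).trans
      (le_add_of_nonneg_right (by positivity))
  · simp [branchVec_apply_nil, flowDefect_branchVec hy]

theorem treeNorm_branchVec_succ_sub_le {y : ℕ → α} (hy : ∀ n, PiNat.res y n ∈ T) (k : ℕ) :
    treeNorm T (branchVec y (k + 1) - branchVec y k) ≤ 2 * (1 / 2 : 𝕜) ^ (k + 1) := by
  have hpos : (0 : 𝕜) < (1 / 2) ^ (k + 1) := by positivity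
  have hpow : (1 / 2 : 𝕜) ^ (k + 2) ≤ (1 / 2) ^ (k + 1) := by
    rw [pow_succ]; linarith
  refine max_le ?_ ?_
  · rw [branchVec_succ, add_sub_cancel_left, weightedSum_single, nodeWeight_res, abs_one, mul_one]
    linarith
  · have h := (isScalarSeminorm_flowDefect T).map_sub_le
      (branchVec y (k + 1) : List α →₀ 𝕜) (branchVec y k)
    rw [flowDefect_branchVec hy, flowDefect_branchVec hy] at h
    simp only [Pi.add_apply, Finsupp.sub_apply, branchVec_apply_nil, sub_self, abs_zero, zero_add]
    linarith

section Limits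

variable [TopologicalSpace 𝕜] [OrderTopology 𝕜] {v : ℕ → List α →₀ 𝕜}

theorem tendsto_treeNorm_branchVec [Archimedean 𝕜] {y : ℕ → α} (hy : ∀ n, PiNat.res y n ∈ T) :
    Tendsto (fun k => treeNorm T (branchVec y k : List α →₀ 𝕜)) atTop (𝓝 1) := by
  have hpow : Tendsto (fun k : ℕ => (1 / 2 : 𝕜) ^ (k + 1)) atTop (𝓝 0) :=
    (tendsto_pow_atTop_nhds_zero_of_lt_one (by norm_num) (by norm_num)).comp
      (tendsto_add_atTop_nat 1)
  refine tendsto_of_tendsto_of_tendsto_of_le_of_le tendsto_const_nhds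
    (by simpa using hpow.const_add 1) (fun k => ?_) (treeNorm_branchVec_le hy)
  simpa [branchVec_apply_nil] using abs_apply_nil_le_treeNorm T (branchVec y k : List α →₀ 𝕜)

theorem tendsto_flowDefect_zero (hnorm : Tendsto (fun k => treeNorm T (v k)) atTop (𝓝 1))
    (hroot : Tendsto (fun k => v k []) atTop (𝓝 1)) :
    Tendsto (fun k => flowDefect T (v k)) atTop (𝓝 0) := by
  refine tendsto_of_tendsto_of_tendsto_of_le_of_le tendsto_const_nhds
    (by simpa using hnorm.sub hroot.abs) (fun k => (isScalarSeminorm_flowDefect T).nonneg _)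
    fun k => le_sub_iff_add_le'.2 (abs_apply_nil_add_flowDefect_le_treeNorm T (v k))

theorem tendsto_apply_zero_of_forall_cons (hv : IsCauchyFor (weightedSum nodeWeight) v)
    (hdefect : Tendsto (fun k => flowDefect T (v k)) atTop (𝓝 0)) {t : List α}
    (ht : ∀ a, Tendsto (fun k => v k (a :: t)) atTop (𝓝 0)) :
    Tendsto (fun k => v k t) atTop (𝓝 0) := by
  have hchildren : Tendsto
      (fun k => weightedSum ((Set.range (· :: t)).indicator nodeWeight) (v k)) atTop (𝓝 0) := by
    refine tendsto_weightedSum_zero (indicator_nodeWeight_nonneg _)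
      (hv.mono (weightedSum_mono (Set.indicator_le_self' fun s _ => nodeWeight_nonneg s)))
      fun s hs => ?_
    obtain ⟨a, rfl⟩ := Set.mem_of_indicator_ne_zero hs
    exact ht a
  exact tendsto_zero_of_mul_abs_le (nodeWeight_pos t)
    (fun k => nodeWeight_mul_abs_apply_le_flowDefect_add T (v k) t)
    (by simpa using hdefect.add (hchildren.const_mul 2))

theorem hasBranch_of_tendsto (hv : IsCauchyFor (treeNorm T) v)
    (hnorm : Tendsto (fun k => treeNorm T (v k)) atTop (𝓝 1))
    (hroot : Tendsto (fun k => v k []) atTop (𝓝 1)) : HasBranch T := by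
  have hdefect := tendsto_flowDefect_zero hnorm hroot
  have hbranch : HasBranch {t | ¬ Tendsto (fun k => v k t) atTop (𝓝 0)} := by
    refine hasBranch_of_forall_exists_cons_mem
      (fun h => one_ne_zero (tendsto_nhds_unique hroot h)) fun t ht => ?_
    by_contra! hchildren
    exact ht (tendsto_apply_zero_of_forall_cons
      (hv.mono (weightedSum_nodeWeight_le_treeNorm T)) hdefect
      fun a => not_not.1 (hchildren a))
  refine hbranch.mono fun t ht => not_not.1 fun htT => ht ?_
  exact tendsto_zero_of_mul_abs_le (nodeWeight_pos t)
    (fun k => nodeWeight_mul_abs_apply_le_flowDefect htT (v k)) hdefect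

end Limits

theorem attainsNorm_treeNorm_iff [Archimedean 𝕜] :
    AttainsNorm (treeNorm T) (fun v : List α →₀ 𝕜 => v []) ↔ HasBranch T := by
  let : TopologicalSpace 𝕜 := Preorder.topology 𝕜
  have : OrderTopology 𝕜 := ⟨rfl⟩
  rw [attainsNorm_iff_exists_tendsto]
  constructor
  · rintro ⟨v, hv, hnorm, hroot⟩
    exact hasBranch_of_tendsto hv hnorm hroot
  · rintro ⟨y, hy⟩
    refine ⟨branchVec y, ?_, tendsto_treeNorm_branchVec hy, by simp [branchVec_apply_nil]⟩
    exact (isScalarSeminorm_treeNorm T).isCauchyFor_of_le_geometric_two zero_le_two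
      (treeNorm_branchVec_succ_sub_le hy)

end TreeNorm

section Reduction

theorem mem_Yset_iff {x : Xspace} : x ∈ Yset ↔ AttainsNorm x.val.1 x.val.2 :=
  Iff.rfl

/-- The identification of `ℕ →₀ ℚ` with the vectors indexed by words. -/
noncomputable def nodeEquiv : (ℕ →₀ ℚ) ≃ₗ[ℚ] (List ℕ →₀ ℚ) :=
  Finsupp.domLCongr (Denumerable.eqv (List ℕ)).symm

/-- The point of `X` given by the norm attached to `T` and the evaluation at the root. -/
noncomputable def treePoint (T : Set (List ℕ)) : Xspace :=
  ⟨(treeNorm T ∘ nodeEquiv, (fun v : List ℕ →₀ ℚ => v []) ∘ nodeEquiv),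
    { nonneg := ((isScalarSeminorm_treeNorm T).comp nodeEquiv.toLinearMap).nonneg
      eq_zero_iff := fun _ => treeNorm_eq_zero_iff.trans nodeEquiv.map_eq_zero_iff
      smul_eq := ((isScalarSeminorm_treeNorm T).comp nodeEquiv.toLinearMap).map_smul
      add_le := ((isScalarSeminorm_treeNorm T).comp nodeEquiv.toLinearMap).map_add_le },
    ((Finsupp.lapply []).comp nodeEquiv.toLinearMap).isLinear,
    fun v => abs_apply_nil_le_treeNorm T (nodeEquiv v)⟩

theorem treePoint_mem_Yset_iff {T : Set (List ℕ)} : treePoint T ∈ Yset ↔ HasBranch T :=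
  (mem_Yset_iff.trans
    (attainsNorm_comp_addEquiv_iff nodeEquiv.toAddEquiv (treeNorm T) fun v => v [])).trans
    attainsNorm_treeNorm_iff

theorem continuous_treePoint {P : Type*} [TopologicalSpace P] {T : P → Set (List ℕ)}
    (hT : ∀ t, IsLocallyConstant fun c => t ∈ T c) : Continuous fun c => treePoint (T c) := by
  refine Continuous.subtype_mk (Continuous.prodMk (continuous_pi fun v => ?_) continuous_const) _
  exact (isLocallyConstant_treeNorm hT (nodeEquiv v)).continuous

theorem contReducibleToY_hasBranch {T : (ℕ → ℕ) → Set (List ℕ)}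
    (hT : ∀ t, IsLocallyConstant fun c => t ∈ T c) : ContReducibleToY {c | HasBranch (T c)} :=
  ⟨fun c => treePoint (T c), continuous_treePoint hT, fun _ => treePoint_mem_Yset_iff.symm⟩

theorem ContReducibleToY.measurableSet {C : Set (ℕ → ℕ)} (hC : ContReducibleToY C)
    (hY : @MeasurableSet Xspace (borel Xspace) Yset) : MeasurableSet C := by
  obtain ⟨φ, hφ, hmem⟩ := hC
  have hpre := hφ.borel_measurable hY
  rw [← BorelSpace.measurable_eq] at hpre
  rwa [Set.ext hmem]

end Reduction

/-- The set `Y` is not a Borel subset of the space `X`. -/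
theorem stmt11 : ¬ @MeasurableSet Xspace (borel Xspace) Yset := by
  intro hY
  have hborel : MeasurableSet {c | HasBranch (diagonalTree c)} :=
    (contReducibleToY_hasBranch isLocallyConstant_mem_diagonalTree).measurableSet hY
  exact not_analyticSet_compl_hasBranch_diagonalTree hborel.compl.analyticSet
end

section
/- The set W of all rational norms p ∈ Z such that the three closed balls of radius 1 around 2e₀, 2e₁ and 2e₀ + 2e₁ have a nonempty intersection in the completion of (N, p) — concretely, such that there exists a sequence (w_k) in N that is Cauchy with respect to p and satisfies limsup_k p(w_k − 2e₀) ≤ 1, limsup_k p(w_k − 2e₁) ≤ 1 and limsup_k p(w_k − 2e₀ − 2e₁) ≤ 1 — is an analytic subset of the Polish space Z. -/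
/-- The Polish space `Z` of all rational norms on `N`, topologized as a subspace of
`N → ℚ` (with `ℚ` discrete). -/
def Zspace : Type := {p : (ℕ →₀ ℚ) → ℚ // IsRatNorm p}

instance : TopologicalSpace Zspace := instTopologicalSpaceSubtype

/-- The set `W ⊆ Z` of rational norms `p` such that the three closed balls of radius `1`
around `2e₀`, `2e₁` and `2e₀ + 2e₁` have a common point in the completion of `(N, p)`:
there is a `p`-Cauchy sequence `(w k)` whose distances to the three centers have
`limsup ≤ 1`. -/
def Wset : Set Zspace :=
  {p | ∃ w : ℕ → ℕ →₀ ℚ, IsCauchyWrt p.val w ∧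
    Filter.limsup (fun k => ((p.val (w k - Finsupp.single 0 2) : ℚ) : ℝ)) Filter.atTop ≤ 1 ∧
    Filter.limsup (fun k => ((p.val (w k - Finsupp.single 1 2) : ℚ) : ℝ)) Filter.atTop ≤ 1 ∧
    Filter.limsup
      (fun k => ((p.val (w k - Finsupp.single 0 2 - Finsupp.single 1 2) : ℚ) : ℝ))
      Filter.atTop ≤ 1}

/-!
`W` is the projection to `Z` of the set of pairs `(p, w)`, with `w` a sequence in `N`, satisfying
the Cauchy and `limsup` conditions. Since `N` is countable, `(p, v) ↦ p v` is Borel measurable on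
`Z × N` for the discrete structure on `N`, so both conditions are Borel. The space
`Z` is Polish, because each norm axiom constrains finitely many values of `p` at a time and is
therefore a closed condition; so `Z` and `N^ℕ` are standard Borel and the projection is analytic.
-/

open Filter MeasureTheory Set

instance : DiscreteTopology ℚ := ⟨rfl⟩

theorem isRatNorm_iff {p : (ℕ →₀ ℚ) → ℚ} :
    IsRatNorm p ↔ (∀ v, 0 ≤ p v) ∧ (∀ v, p v = 0 ↔ v = 0) ∧
      (∀ (q : ℚ) (v), p (q • v) = |q| * p v) ∧ ∀ v w, p (v + w) ≤ p v + p w :=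
  ⟨fun h => ⟨h.nonneg, h.eq_zero_iff, h.smul_eq, h.add_le⟩,
    fun ⟨hnonneg, hzero, hsmul, hadd⟩ => ⟨hnonneg, hzero, hsmul, hadd⟩⟩

theorem isClosed_setOfPred_isRatNorm : IsClosed {p : (ℕ →₀ ℚ) → ℚ | IsRatNorm p} := by
  have : OrderClosedTopology ℚ := ⟨isClosed_discrete _⟩
  simp only [isRatNorm_iff, ofPred_and, ofPred_forall]
  refine .inter ?nonneg (.inter ?zero (.inter ?smul ?add))
  case nonneg =>
    exact isClosed_iInter fun v => isClosed_le continuous_const (continuous_apply v)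
  case zero =>
    exact isClosed_iInter fun v =>
      (isClosed_discrete {x | x = 0 ↔ v = 0}).preimage (f := Function.eval v) (continuous_apply v)
  case smul =>
    exact isClosed_iInter fun q => isClosed_iInter fun v =>
      isClosed_eq (continuous_apply (q • v)) (continuous_const.mul (continuous_apply v))
  case add =>
    exact isClosed_iInter fun v => isClosed_iInter fun w =>
      isClosed_le (continuous_apply (v + w)) ((continuous_apply v).add (continuous_apply w))

-- Without this shortcut, instance search for `PolishSpace ((ℕ →₀ ℚ) → ℚ)` fails.
instance : PolishSpace ℚ := inferInstance

instance : PolishSpace Zspace := isClosed_setOfPred_isRatNorm.polishSpace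

theorem Zspace.continuous_apply (v : ℕ →₀ ℚ) : Continuous fun p : Zspace => p.val v :=
  (_root_.continuous_apply v).comp continuous_subtype_val

section Measurability

variable {Ω : Type*} [MeasurableSpace Ω]

theorem measurable_apply_of_countable {N Y : Type*} [Countable N] [MeasurableSpace N]
    [MeasurableSingletonClass N] [MeasurableSpace Y] {f : Ω → N → Y} {g : Ω → N}
    (hf : ∀ v, Measurable fun x => f x v) (hg : Measurable g) :
    Measurable fun x => f x (g x) :=
  (measurable_from_prod_countable_left (f := fun y : Ω × N => f y.1 y.2) hf).comp
    (measurable_id.prodMk hg)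

theorem measurableSet_setOfPred_isCauchyWrt [MeasurableSpace (ℕ →₀ ℚ)]
    [DiscreteMeasurableSpace (ℕ →₀ ℚ)] {p : Ω → (ℕ →₀ ℚ) → ℚ} {w : Ω → ℕ → ℕ →₀ ℚ}
    (hp : ∀ v, Measurable fun x => p x v) (hw : ∀ k, Measurable fun x => w x k) :
    MeasurableSet {x | IsCauchyWrt (p x) (w x)} := by
  have hdist (m k : ℕ) : Measurable fun x => p x (w x m - w x k) :=
    measurable_apply_of_countable hp ((hw m).sub (hw k))
  simp only [IsCauchyWrt, ofPred_forall, ofPred_exists]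
  exact .iInter fun ε => .iInter fun _ => .iUnion fun K => .iInter fun m => .iInter fun k =>
    .iInter fun _ => .iInter fun _ => hdist m k (.of_discrete (s := Iio ε))

theorem measurableSet_setOfPred_limsup_apply_sub_le {N : Type*} [Countable N] [Sub N]
    [MeasurableSpace N] [MeasurableSingletonClass N] [MeasurableSub N] {f : Ω → N → ℝ}
    {w : Ω → ℕ → N} (hf : ∀ v, Measurable fun x => f x v) (hw : ∀ k, Measurable fun x => w x k)
    (c : N) (r : ℝ) : MeasurableSet {x | limsup (fun k => f x (w x k - c)) atTop ≤ r} :=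
  measurableSet_le (.limsup fun k => measurable_apply_of_countable hf ((hw k).sub_const c))
    measurable_const

end Measurability

theorem analyticSet_setOfPred_exists {X Y : Type*} [TopologicalSpace X] [PolishSpace X]
    [MeasurableSpace X] [BorelSpace X] [MeasurableSpace Y] [StandardBorelSpace Y]
    {P : X → Y → Prop} (hP : MeasurableSet {z : X × Y | P z.1 z.2}) :
    AnalyticSet {x | ∃ y, P x y} := by
  have himage : {x | ∃ y, P x y} = Prod.fst '' {z : X × Y | P z.1 z.2} := by
    ext x
    simp
  exact himage ▸ hP.analyticSet_image measurable_fst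

theorem stmt12_general {ι : Type*} [Countable ι] (c : ι → ℕ →₀ ℚ) (r : ι → ℝ) :
    AnalyticSet {p : Zspace | ∃ w : ℕ → ℕ →₀ ℚ, IsCauchyWrt p.val w ∧
      ∀ i, limsup (fun k => (p.val (w k - c i) : ℝ)) atTop ≤ r i} := by
  borelize Zspace
  let : MeasurableSpace (ℕ →₀ ℚ) := ⊤
  have hp (v : ℕ →₀ ℚ) : Measurable fun z : Zspace × (ℕ → ℕ →₀ ℚ) => z.1.val v :=
    (Zspace.continuous_apply v).measurable.comp measurable_fst
  have hw (k : ℕ) : Measurable fun z : Zspace × (ℕ → ℕ →₀ ℚ) => z.2 k :=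
    (measurable_pi_apply k).comp measurable_snd
  refine analyticSet_setOfPred_exists ?_
  simp only [ofPred_and, ofPred_forall]
  exact (measurableSet_setOfPred_isCauchyWrt hp hw).inter
    (.iInter fun i => measurableSet_setOfPred_limsup_apply_sub_le
      (fun v => Measurable.of_discrete.comp (hp v)) hw (c i) (r i))

/-- The set `W` of norms for which the three closed unit balls around `2e₀`, `2e₁`,
`2e₀ + 2e₁` meet in the completion is an analytic subset of `Z`. -/
theorem stmt12 : MeasureTheory.AnalyticSet Wset := by
  simpa [Wset, Fin.forall_fin_succ, sub_sub] using stmt12_general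
    ![Finsupp.single 0 2, Finsupp.single 1 2, Finsupp.single 0 2 + Finsupp.single 1 2] 1
end
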